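/- arXiv:math/0109035 — 2 statements merged into one kernel-verified Lean document; each statement's English description precedes it below -/
import Mathlib

section
/- Let S = k[x_0,...,x_n] be a polynomial ring over a field, and let X be an arrangement of d linear subspaces of projective n-space with defining ideals I_1,...,I_d (each generated by linear forms). Then the ideal I(X) = I_1 ∩ ... ∩ I_d is d-regular in the sense of Castelnuovo–Mumford, i.e., reg(I_1 ∩ ... ∩ I_d) ≤ d. -/
open MvPolynomial
attribute [local instance] MvPolynomial.gradedAlgebra

/-- The polynomial ring `S = k[x_0, …, x_n]`. -/
noncomputable abbrev MvP (k : Type*) [Field k] (n : ℕ) : Type _ := MvPolynomial (Fin (n+1)) k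

/-- An ideal generated by linear forms. -/
def IsLinearIdeal {k : Type*} [Field k] {n : ℕ} (I : Ideal (MvP k n)) : Prop :=
  ∃ T : Set (MvP k n), T ⊆ (homogeneousSubmodule (Fin (n+1)) k 1 : Submodule k (MvP k n)) ∧
    I = Ideal.span T

/-- `I` is `r`-regular (Castelnuovo–Mumford): there is a graded free resolution
`⋯ → ⊕_α S(-e_{α,i}) → ⋯ → ⊕_α S(-e_{α,0}) → I → 0` with all `e_{α,i} ≤ r + i`.
The `i`-th free module is `Fin (ρ i) → S` with generator degrees `e i`; gradedness of the
maps is expressed by homogeneity of the matrix entries (images of the standard basis). -/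
def IdealIsRegular {k : Type*} [Field k] {n : ℕ} (I : Ideal (MvP k n)) (r : ℤ) : Prop :=
  ∃ (ρ : ℕ → ℕ) (e : ∀ i, Fin (ρ i) → ℕ)
    (δ : ∀ i, (Fin (ρ (i+1)) → MvP k n) →ₗ[MvP k n] (Fin (ρ i) → MvP k n))
    (ε : (Fin (ρ 0) → MvP k n) →ₗ[MvP k n] MvP k n),
    LinearMap.range ε = I ∧
    LinearMap.ker ε = LinearMap.range (δ 0) ∧
    (∀ i, LinearMap.ker (δ i) = LinearMap.range (δ (i+1))) ∧
    (∀ β, ε (Pi.single β 1) ∈ homogeneousSubmodule (Fin (n+1)) k (e 0 β)) ∧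
    (∀ i (β : Fin (ρ (i+1))) (α : Fin (ρ i)), δ i (Pi.single β 1) α = 0 ∨
      (e i α ≤ e (i+1) β ∧
        δ i (Pi.single β 1) α ∈ homogeneousSubmodule (Fin (n+1)) k (e (i+1) β - e i α))) ∧
    (∀ i (β : Fin (ρ i)), (e i β : ℤ) ≤ r + i)

/-!
Let `J = ⨅ i ∈ s, Iᵢ` be an intersection of `d` linear ideals. The Koszul homology of `J` with
respect to the variables is a module over the exterior algebra `Λ(V^*)`, where `V` is the space of
linear forms. Choose a basis of the span of all the linear forms in the `Iᵢ` and extend it to `V`.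
Truncated division by each of the other basis forms preserves `J`, so Koszul cycles may be taken to
involve only the chosen linear forms, and it follows that the product of the coordinates dual to
these forms annihilates the homology.

A linear form `y ∈ Iᵢ` multiplies `J' = ⨅ j ≠ i, Iⱼ` into `J`. By induction on `d` the Koszul
complex of `J'` is exact in internal degrees above `d - 1`, and lifting cycles of `J` to `J'` turns
multiplication by `y` into an operator on the Koszul homology of `J` above degree `d` which
satisfies a Clifford relation with the exterior multiplications. Hence contracting an annihilator
with `y` gives an annihilator; contracting the product of coordinates factor by factor shows that
`1` annihilates the homology. Finally, the vanishing of Koszul homology bounds the degrees of the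
generators of `J` and passes, with the bound raised by one, to the syzygies, which produces the
resolution.
-/

section KoszulComplex

/-- The exterior algebra `Λ(V^*)` on the dual of `V`. -/
abbrev DualExterior (k V : Type*) [CommRing k] [AddCommGroup V] [Module k V] : Type _ :=
  ExteriorAlgebra k (Module.Dual k V)

variable {k V S M N ι : Type*} [CommRing k] [AddCommGroup V] [Module k V]

/-- The contraction `Λ(V^*) → Λ(V^*)` with a vector of `V`. -/
noncomputable def contract (c : V) : DualExterior k V →ₗ[k] DualExterior k V :=
  CliffordAlgebra.contractLeft (Q := 0) (Module.Dual.eval k V c)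

/-- The wedge product of the coordinate forms of a basis along a list of indices. -/
noncomputable def coordProd (b : Module.Basis ι k V) (l : List ι) : DualExterior k V :=
  ((l.map b.coord).map (ExteriorAlgebra.ι k)).prod

theorem contract_ι_mul (c : V) (v : Module.Dual k V) (ω : DualExterior k V) :
    contract c (ExteriorAlgebra.ι k v * ω) = v c • ω - ExteriorAlgebra.ι k v * contract c ω :=
  CliffordAlgebra.contractLeft_ι_mul (Q := 0) _ v ω

theorem contract_mul (c : V) (m ω : DualExterior k V) :
    contract c (m * ω) = contract c m * ω + CliffordAlgebra.involute m * contract c ω := by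
  induction m using CliffordAlgebra.left_induction generalizing ω with
  | algebraMap r =>
    simp [contract, CliffordAlgebra.contractLeft_algebraMap_mul,
      CliffordAlgebra.contractLeft_algebraMap]
  | add m m' hm hm' =>
    rw [add_mul, map_add, hm, hm', map_add, map_add]
    noncomm_ring
  | ι_mul m v hm =>
    rw [mul_assoc, contract_ι_mul, contract_ι_mul, hm, map_mul, CliffordAlgebra.involute_ι]
    simp only [sub_mul, mul_add, smul_mul_assoc, mul_assoc, neg_mul]
    abel

theorem ι_mul_ι_anticomm (v w : Module.Dual k V) :
    ExteriorAlgebra.ι k v * ExteriorAlgebra.ι k w =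
      -(ExteriorAlgebra.ι k w * ExteriorAlgebra.ι k v) :=
  eq_neg_of_add_eq_zero_left (ExteriorAlgebra.ι_add_mul_swap v w)

theorem ι_mul_eq_involute_mul_ι (v : Module.Dual k V) (m : DualExterior k V) :
    ExteriorAlgebra.ι k v * m = CliffordAlgebra.involute m * ExteriorAlgebra.ι k v := by
  induction m using CliffordAlgebra.left_induction with
  | algebraMap r => rw [AlgHom.commutes, Algebra.commutes]
  | add m m' hm hm' => rw [mul_add, hm, hm', map_add, add_mul]
  | ι_mul m w hm =>
    rw [← mul_assoc, ι_mul_ι_anticomm, map_mul, CliffordAlgebra.involute_ι, neg_mul, neg_mul,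
      neg_mul, mul_assoc, mul_assoc, hm]

theorem coordProd_cons (b : Module.Basis ι k V) (a : ι) (l : List ι) :
    coordProd b (a :: l) = ExteriorAlgebra.ι k (b.coord a) * coordProd b l := by
  simp [coordProd]

theorem ι_coord_mul_coordProd (b : Module.Basis ι k V) {a : ι} {l : List ι} (ha : a ∈ l) :
    ExteriorAlgebra.ι k (b.coord a) * coordProd b l = 0 := by
  induction l with
  | nil => simp at ha
  | cons i l ih =>
    rw [coordProd_cons, ← mul_assoc]
    rcases List.mem_cons.1 ha with rfl | ha
    · rw [ExteriorAlgebra.ι_sq_zero, zero_mul]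
    · rw [ι_mul_ι_anticomm, neg_mul, mul_assoc, ih ha, mul_zero, neg_zero]

theorem contract_coordProd_of_notMem (b : Module.Basis ι k V) {a : ι} {l : List ι} (ha : a ∉ l) :
    contract (b a) (coordProd b l) = 0 := by
  induction l with
  | nil => exact CliffordAlgebra.contractLeft_one (Q := 0) _
  | cons i l ih =>
    obtain ⟨hai, hal⟩ := not_or.1 (List.mem_cons.not.1 ha)
    rw [coordProd_cons, contract_ι_mul, ih hal, b.coord_apply, b.repr_self,
      Finsupp.single_eq_of_ne (Ne.symm hai), zero_smul, mul_zero, sub_zero]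

theorem contract_coordProd_cons (b : Module.Basis ι k V) {a : ι} {l : List ι} (ha : a ∉ l) :
    contract (b a) (coordProd b (a :: l)) = coordProd b l := by
  rw [coordProd_cons, contract_ι_mul, contract_coordProd_of_notMem b ha, b.coord_apply,
    b.repr_self, Finsupp.single_eq_same, one_smul, mul_zero, sub_zero]

theorem involute_coordProd (b : Module.Basis ι k V) (l : List ι) :
    CliffordAlgebra.involute (coordProd b l) = (-1 : k) ^ l.length • coordProd b l := by
  simpa [coordProd] using CliffordAlgebra.involute_prod_map_ι (Q := 0) (l.map b.coord)

variable [CommRing S] [Algebra k S]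
  [AddCommGroup M] [Module k M] [Module S M] [IsScalarTower k S M]
  [AddCommGroup N] [Module k N] [Module S N] [IsScalarTower k S N]

theorem algebraMapInv_ι_mul (v : Module.Dual k V) (ω : DualExterior k V) :
    ExteriorAlgebra.algebraMapInv (ExteriorAlgebra.ι k v * ω) = 0 := by
  simp [ExteriorAlgebra.algebraMapInv]

/-- The element `s` of `M`, viewed as a Koszul cycle of exterior degree `0`. -/
noncomputable def constChain (s : M) : DualExterior k V →ₗ[k] M :=
  ExteriorAlgebra.algebraMapInv.toLinearMap.smulRight s

theorem constChain_one (s : M) : constChain s (1 : DualExterior k V) = s := by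
  simp [constChain]

theorem constChain_add (s t : M) :
    (constChain (s + t) : DualExterior k V →ₗ[k] M) = constChain s + constChain t :=
  LinearMap.ext fun _ ↦ smul_add _ s t

theorem eq_constChain {z : DualExterior k V →ₗ[k] M}
    (hz : ∀ v ω, z (ExteriorAlgebra.ι k v * ω) = 0) : z = constChain (z 1) := by
  refine LinearMap.ext fun ω ↦ ?_
  induction ω using CliffordAlgebra.left_induction with
  | algebraMap r => simp [constChain, Algebra.algebraMap_eq_smul_one]
  | add ω ω' hω hω' => rw [map_add, hω, hω', map_add]
  | ι_mul ω v _ =>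
    change z (ExteriorAlgebra.ι k v * ω) = constChain (z 1) (ExteriorAlgebra.ι k v * ω)
    rw [hz, constChain, LinearMap.smulRight_apply, AlgHom.toLinearMap_apply, algebraMapInv_ι_mul,
      zero_smul]

section Differential
variable [Module.Free k V] [Module.Finite k V] (x : V →ₗ[k] S)

/-- The differential `(d z)(ω) = ∑ᵢ xᵢ z(eᵢ ∧ ω)` of the Koszul complex of `x : V → S` with
coefficients in `M`. The complex `Λ(V) ⊗ M` is encoded as `Hom_k(Λ(V^*), M)`, in all exterior
degrees at once; `eᵢ` is the dual basis of a basis of `V` with images `xᵢ`. -/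
noncomputable def koszulD : (DualExterior k V →ₗ[k] M) →ₗ[S] (DualExterior k V →ₗ[k] M) :=
  ∑ i, x (Module.Free.chooseBasis k V i) •
    { toFun z := z ∘ₗ LinearMap.mulLeft k
        (ExteriorAlgebra.ι k ((Module.Free.chooseBasis k V).coord i))
      map_add' _ _ := LinearMap.add_comp _ _ _
      map_smul' _ _ := LinearMap.smul_comp _ _ _ }

theorem koszulD_apply [Fintype ι] (b : Module.Basis ι k V) (z : DualExterior k V →ₗ[k] M)
    (ω : DualExterior k V) :
    koszulD x z ω = ∑ j, x (b j) • z (ExteriorAlgebra.ι k (b.coord j) * ω) := by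
  set b₀ := Module.Free.chooseBasis k V
  calc koszulD x z ω = ∑ i, x (b₀ i) • z (ExteriorAlgebra.ι k (b₀.coord i) * ω) := by
        simp [koszulD, b₀, LinearMap.sum_apply]
    _ = ∑ i, ∑ j, x (b.coord j (b₀ i) • b j) • z (ExteriorAlgebra.ι k (b₀.coord i) * ω) := by
        refine Finset.sum_congr rfl fun i _ ↦ ?_
        rw [← Finset.sum_smul, ← map_sum]
        exact congrArg (fun c ↦ x c • _) (b.sum_repr (b₀ i)).symm
    _ = ∑ j, ∑ i, x (b j) • z (ExteriorAlgebra.ι k (b.coord j (b₀ i) • b₀.coord i) * ω) := by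
        rw [Finset.sum_comm]
        refine Finset.sum_congr rfl fun j _ ↦ Finset.sum_congr rfl fun i _ ↦ ?_
        rw [map_smul, map_smul, smul_mul_assoc, map_smul, smul_assoc, smul_comm]
    _ = _ := by
        refine Finset.sum_congr rfl fun j _ ↦ ?_
        rw [← Finset.smul_sum, ← map_sum, ← Finset.sum_mul, ← map_sum,
          b₀.sum_dual_apply_smul_coord]

theorem koszulD_koszulD (z : DualExterior k V →ₗ[k] M) : koszulD x (koszulD x z) = 0 := by
  refine LinearMap.ext fun ω ↦ ?_
  simp only [koszulD_apply x (Module.Free.chooseBasis k V), Finset.smul_sum, smul_smul,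
    LinearMap.zero_apply]
  rw [← Finset.sum_product']
  refine Finset.sum_involution (fun p _ ↦ p.swap) ?_ ?_ (by simp) (by simp)
  · rintro ⟨i, j⟩ -
    rw [← mul_assoc, ← mul_assoc, ι_mul_ι_anticomm, mul_comm (x _)]
    simp
  · rintro ⟨i, j⟩ - hne hswap
    obtain rfl : j = i := congrArg Prod.fst hswap
    rw [← mul_assoc, ExteriorAlgebra.ι_sq_zero] at hne
    simp at hne

theorem koszulD_comp_contract (c : V) (z : DualExterior k V →ₗ[k] M) :
    koszulD x (z ∘ₗ contract c) = x c • z - koszulD x z ∘ₗ contract c := by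
  let b := Module.Free.chooseBasis k V
  refine LinearMap.ext fun ω ↦ ?_
  simp only [koszulD_apply x b, LinearMap.comp_apply, LinearMap.sub_apply, LinearMap.smul_apply,
    contract_ι_mul, map_sub, smul_sub, Finset.sum_sub_distrib]
  congr 1
  conv_rhs => rw [← b.sum_repr c, map_sum, Finset.sum_smul]
  refine Finset.sum_congr rfl fun i _ ↦ ?_
  rw [map_smul, map_smul, smul_assoc, smul_comm]
  rfl

theorem koszulD_comp_mulLeft (m : DualExterior k V) (z : DualExterior k V →ₗ[k] M) :
    koszulD x (z ∘ₗ LinearMap.mulLeft k m) =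
      koszulD x z ∘ₗ LinearMap.mulLeft k (CliffordAlgebra.involute m) := by
  refine LinearMap.ext fun ω ↦ ?_
  simp only [koszulD_apply x (Module.Free.chooseBasis k V), LinearMap.comp_apply,
    LinearMap.mulLeft_apply]
  refine Finset.sum_congr rfl fun i _ ↦ ?_
  rw [← mul_assoc, ← mul_assoc, ι_mul_eq_involute_mul_ι _ (CliffordAlgebra.involute m),
    CliffordAlgebra.involute_involute]

theorem koszulD_linearMap_comp (φ : M →ₗ[S] N) (z : DualExterior k V →ₗ[k] M) :
    koszulD x (φ.restrictScalars k ∘ₗ z) = φ.restrictScalars k ∘ₗ koszulD x z := by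
  refine LinearMap.ext fun ω ↦ ?_
  simp [koszulD_apply x (Module.Free.chooseBasis k V)]

theorem koszulD_constChain (s : M) :
    koszulD x (constChain s : DualExterior k V →ₗ[k] M) = 0 := by
  refine LinearMap.ext fun ω ↦ ?_
  simp [koszulD_apply x (Module.Free.chooseBasis k V), constChain, algebraMapInv_ι_mul]

theorem koszulD_constChain_comp_contract (c : V) (s : M) :
    koszulD x (constChain s ∘ₗ contract c) = constChain (x c • s) := by
  rw [koszulD_comp_contract, koszulD_constChain, LinearMap.zero_comp, sub_zero]
  refine LinearMap.ext fun ω ↦ ?_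
  exact smul_comm _ _ _

end Differential

section Exactness

/-- The Koszul chains with values in a submodule `W` of the coefficient module. -/
def koszulChains (W : Submodule k M) : Submodule k (DualExterior k V →ₗ[k] M) where
  carrier := {z | ∀ ω, z ω ∈ W}
  add_mem' hz hz' ω := add_mem (hz ω) (hz' ω)
  zero_mem' _ := zero_mem W
  smul_mem' a _ hz ω := W.smul_mem a (hz ω)

theorem smul_mem_koszulChains {W₀ W₁ : Submodule k M} {a : S} (ha : ∀ s ∈ W₀, a • s ∈ W₁)
    {z : DualExterior k V →ₗ[k] M} (hz : z ∈ koszulChains W₀) : a • z ∈ koszulChains W₁ :=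
  fun ω ↦ ha _ (hz ω)

theorem exists_koszulChain_lift [Module.Projective k (DualExterior k V)] {p : M →ₗ[k] N}
    {W : Submodule k M} {z : DualExterior k V →ₗ[k] N} (hz : z ∈ koszulChains (W.map p)) :
    ∃ y ∈ koszulChains W, p ∘ₗ y = z := by
  obtain ⟨y, hy⟩ := Module.projective_lifting_property (p.submoduleMap W)
    (z.codRestrict (W.map p) hz) (p.submoduleMap_surjective W)
  exact ⟨W.subtype ∘ₗ y, fun ω ↦ (y ω).2,
    LinearMap.ext fun ω ↦ congrArg Subtype.val (LinearMap.congr_fun hy ω)⟩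

variable [Module.Free k V] [Module.Finite k V] (x : V →ₗ[k] S)

/-- The Koszul cycles with values in `W`. -/
noncomputable def koszulCycles (W : Submodule k M) : Submodule k (DualExterior k V →ₗ[k] M) :=
  koszulChains W ⊓ LinearMap.ker ((koszulD x).restrictScalars k)

/-- The boundaries of the Koszul chains with values in `W`. -/
noncomputable def koszulBoundaries (W : Submodule k M) :
    Submodule k (DualExterior k V →ₗ[k] M) :=
  (koszulChains W).map ((koszulD x).restrictScalars k)

/-- Exactness of the Koszul complex in one internal degree: every cycle with values in `W₁` is
the boundary of a chain with values in `W₀`. In the applications `W₀` and `W₁` are consecutive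
graded pieces of a graded module. -/
def IsKoszulExact (W₀ W₁ : Submodule k M) : Prop :=
  koszulCycles x W₁ ≤ koszulBoundaries x W₀

theorem isKoszulExact_pi {M : ι → Type*} [∀ β, AddCommGroup (M β)] [∀ β, Module k (M β)]
    [∀ β, Module S (M β)] [∀ β, IsScalarTower k S (M β)] {W₀ W₁ : ∀ β, Submodule k (M β)}
    (h : ∀ β, IsKoszulExact x (W₀ β) (W₁ β)) :
    IsKoszulExact x (Submodule.pi Set.univ W₀) (Submodule.pi Set.univ W₁) := by
  rintro z ⟨hzW, hz : koszulD x z = 0⟩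
  have hzβ (β) : (LinearMap.proj β : (∀ β, M β) →ₗ[S] M β).restrictScalars k ∘ₗ z ∈
      koszulCycles x (W₁ β) := by
    refine ⟨fun ω ↦ hzW ω β (Set.mem_univ β), ?_⟩
    change koszulD x _ = 0
    rw [koszulD_linearMap_comp, hz, LinearMap.comp_zero]
  choose w hwW hw using fun β ↦ h β (hzβ β)
  refine ⟨LinearMap.pi w, fun ω β _ ↦ hwW β ω, LinearMap.ext fun ω ↦ funext fun β ↦ ?_⟩
  have hβ := koszulD_linearMap_comp x (LinearMap.proj β : (∀ β, M β) →ₗ[S] M β) (LinearMap.pi w)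
  exact (LinearMap.congr_fun hβ ω).symm.trans (LinearMap.congr_fun (hw β) ω)

theorem isKoszulExact_ker [Module.Projective k (DualExterior k V)] {δ : M →ₗ[S] N}
    {F₀ F₁ F₂ : Submodule k M} {R₀ R₁ : Submodule k N} (hF₀ : ∀ c, ∀ s ∈ F₀, x c • s ∈ F₁)
    (hR₀ : R₀ ≤ F₀.map (δ.restrictScalars k)) (hR₁ : F₁.map (δ.restrictScalars k) ≤ R₁)
    (hF : IsKoszulExact x F₁ F₂) (hR : IsKoszulExact x R₀ R₁) :
    IsKoszulExact x ((LinearMap.ker δ).restrictScalars k ⊓ F₁)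
      ((LinearMap.ker δ).restrictScalars k ⊓ F₂) := by
  rintro z ⟨hzW, hz⟩
  have hδz : δ.restrictScalars k ∘ₗ z = 0 := LinearMap.ext fun ω ↦ (hzW ω).1
  obtain ⟨w, hwF, hw : koszulD x w = z⟩ := hF ⟨fun ω ↦ (hzW ω).2, hz⟩
  have hδw : δ.restrictScalars k ∘ₗ w ∈ koszulCycles x R₁ := by
    refine ⟨fun ω ↦ hR₁ ⟨w ω, hwF ω, rfl⟩, ?_⟩
    change koszulD x _ = 0
    rw [koszulD_linearMap_comp, hw, hδz]
  obtain ⟨u, huR, hu : koszulD x u = δ.restrictScalars k ∘ₗ w⟩ := hR hδw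
  obtain ⟨y, hyF, hy⟩ := exists_koszulChain_lift fun ω ↦ hR₀ (huR ω)
  have hker : δ.restrictScalars k ∘ₗ (w - koszulD x y) = 0 := by
    rw [LinearMap.comp_sub, ← koszulD_linearMap_comp, hy, hu, sub_self]
  refine ⟨w - koszulD x y, fun ω ↦ ⟨LinearMap.congr_fun hker ω, sub_mem (hwF ω) ?_⟩, ?_⟩
  · rw [koszulD_apply x (Module.Free.chooseBasis k V)]
    exact sum_mem fun i _ ↦ hF₀ _ _ (hyF _)
  · change koszulD x _ = z
    rw [map_sub, koszulD_koszulD, hw, sub_zero]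

/-- The elements of `Λ(V^*)` annihilating the Koszul homology in one internal degree. -/
noncomputable def koszulAnnihilator (W₀ W₁ : Submodule k M) : Submodule k (DualExterior k V) where
  carrier := {m | ∀ z ∈ koszulCycles x W₁, z ∘ₗ LinearMap.mulLeft k m ∈ koszulBoundaries x W₀}
  add_mem' {m m'} hm hm' z hz := by
    have : z ∘ₗ LinearMap.mulLeft k (m + m') =
        z ∘ₗ LinearMap.mulLeft k m + z ∘ₗ LinearMap.mulLeft k m' :=
      LinearMap.ext fun ω ↦ by simp [add_mul]
    rw [this]
    exact add_mem (hm z hz) (hm' z hz)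
  zero_mem' z _ := by
    rw [LinearMap.mulLeft_zero_eq_zero, LinearMap.comp_zero]
    exact zero_mem _
  smul_mem' a m hm z hz := by
    have : z ∘ₗ LinearMap.mulLeft k (a • m) = a • z ∘ₗ LinearMap.mulLeft k m :=
      LinearMap.ext fun ω ↦ by simp
    rw [this]
    exact Submodule.smul_mem _ a (hm z hz)

variable {x} {W₀ W₁ : Submodule k M}

theorem IsKoszulExact.le_span (h : IsKoszulExact x W₀ W₁) :
    W₁ ≤ (Submodule.span S (W₀ : Set M)).restrictScalars k := by
  intro s hs
  obtain ⟨w, hw, hws : koszulD x w = constChain s⟩ :=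
    h ⟨fun ω ↦ W₁.smul_mem _ hs, koszulD_constChain x s⟩
  rw [← constChain_one (k := k) (V := V) s, ← hws, koszulD_apply x (Module.Free.chooseBasis k V)]
  exact sum_mem fun i _ ↦ Submodule.smul_mem _ _ (Submodule.subset_span (hw _))

theorem isKoszulExact_of_one_mem (h : 1 ∈ koszulAnnihilator x W₀ W₁) : IsKoszulExact x W₀ W₁ :=
  fun z hz ↦ by simpa using h z hz

/-- Sending a cycle `z = d w`, with `w` valued in the `Q`'s, to `z ∘ contract c - x c • w` is the
operator `φ_c` on Koszul homology induced by multiplication by `x c` from the `Q`'s into the `W`'s.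
Its Clifford relation `φ_c v + v φ_c = v(c)` with the multiplications by `v ∈ V^*` is what makes
contractions of annihilators annihilate. -/
theorem contract_mem_koszulAnnihilator {Q₀ Q₁ Q₂ W₁ W₂ : Submodule k M} {c : V}
    (hW₁ : W₁ ≤ Q₁) (hW₂ : W₂ ≤ Q₂) (hc₀ : ∀ s ∈ Q₀, x c • s ∈ W₁) (hc₁ : ∀ s ∈ Q₁, x c • s ∈ W₂)
    (hQ₀ : IsKoszulExact x Q₀ Q₁) (hQ₁ : IsKoszulExact x Q₁ Q₂) {m : DualExterior k V}
    (hm : m ∈ koszulAnnihilator x W₁ W₂)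
    (hm' : CliffordAlgebra.involute m ∈ koszulAnnihilator x W₁ W₂) :
    contract c m ∈ koszulAnnihilator x W₁ W₂ := by
  rintro z ⟨hzW, hz : koszulD x z = 0⟩
  obtain ⟨w, hwQ, hw : koszulD x w = z⟩ := hQ₁ ⟨fun ω ↦ hW₂ (hzW ω), hz⟩
  have hφ : z ∘ₗ contract c - x c • w ∈ koszulCycles x W₂ := by
    refine ⟨sub_mem (fun ω ↦ hzW _) (smul_mem_koszulChains hc₁ hwQ), ?_⟩
    change koszulD x _ = 0
    rw [map_sub, koszulD_comp_contract, map_smul, hw, hz, LinearMap.zero_comp, sub_zero, sub_self]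
  obtain ⟨u, huW, hu : koszulD x u = _⟩ := hm _ hφ
  obtain ⟨u', hu'W, hu' : koszulD x u' = _⟩ := hm' z ⟨hzW, hz⟩
  have hψ : w ∘ₗ LinearMap.mulLeft k m - u' ∈ koszulCycles x Q₁ := by
    refine ⟨fun ω ↦ sub_mem (hwQ _) (hW₁ (hu'W ω)), ?_⟩
    change koszulD x _ = 0
    rw [map_sub, koszulD_comp_mulLeft, hw, hu', sub_self]
  obtain ⟨t, htQ, ht : koszulD x t = _⟩ := hQ₀ hψ
  refine ⟨u + u' ∘ₗ contract c + x c • t,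
    add_mem (add_mem huW fun ω ↦ hu'W _) (smul_mem_koszulChains hc₀ htQ), ?_⟩
  change koszulD x _ = _
  rw [map_add, map_add, hu, koszulD_comp_contract, hu', map_smul, ht]
  refine LinearMap.ext fun ω ↦ ?_
  simp only [LinearMap.add_apply, LinearMap.sub_apply, LinearMap.smul_apply, LinearMap.comp_apply,
    LinearMap.mulLeft_apply, contract_mul, map_add, smul_sub]
  abel

theorem one_mem_koszulAnnihilator_of_coordProd_mem {W₁ W₂ : Submodule k M}
    (b : Module.Basis ι k V) {l : List ι} (hl : l.Nodup)
    (hcolon : ∀ a ∈ l, ∃ Q₀ Q₁ Q₂ : Submodule k M, W₁ ≤ Q₁ ∧ W₂ ≤ Q₂ ∧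
      (∀ s ∈ Q₀, x (b a) • s ∈ W₁) ∧ (∀ s ∈ Q₁, x (b a) • s ∈ W₂) ∧
      IsKoszulExact x Q₀ Q₁ ∧ IsKoszulExact x Q₁ Q₂)
    (h : coordProd b l ∈ koszulAnnihilator x W₁ W₂) : 1 ∈ koszulAnnihilator x W₁ W₂ := by
  induction l with
  | nil => simpa [coordProd] using h
  | cons a l ih =>
    obtain ⟨ha, hl⟩ := List.nodup_cons.1 hl
    refine ih hl (fun i hi ↦ hcolon i (List.mem_cons_of_mem a hi)) ?_
    obtain ⟨Q₀, Q₁, Q₂, hW₁, hW₂, hc₀, hc₁, hQ₀, hQ₁⟩ := hcolon a List.mem_cons_self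
    rw [← contract_coordProd_cons b ha]
    refine contract_mem_koszulAnnihilator hW₁ hW₂ hc₀ hc₁ hQ₀ hQ₁ h ?_
    rw [involute_coordProd]
    exact Submodule.smul_mem _ _ h

end Exactness

section DivisionOperators
variable {x : V →ₗ[k] S}

/-- `D` divides by `x (b u)` and commutes with multiplication by the other `x (b j)`; on a
polynomial ring with variables `x (b j)` this is truncated division by the variable `x (b u)`. -/
structure IsDivisionOperator (x : V →ₗ[k] S) (b : Module.Basis ι k V) (u : ι) (D : M →ₗ[k] M) :
    Prop where
  smul_self (s : M) : D (x (b u) • s) = s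
  smul_of_ne {j : ι} (hj : j ≠ u) (s : M) : D (x (b j) • s) = x (b j) • D s

theorem IsDivisionOperator.smul_of_mem_span {b : Module.Basis ι k V} {u : ι} {D : M →ₗ[k] M}
    (hD : IsDivisionOperator x b u D) {A : Set ι} (hu : u ∉ A) {c : V}
    (hc : c ∈ Submodule.span k (b '' A)) (s : M) : D (x c • s) = x c • D s := by
  induction hc using Submodule.span_induction with
  | mem _ hv =>
    obtain ⟨j, hj, rfl⟩ := hv
    exact hD.smul_of_ne (fun hju ↦ hu (hju ▸ hj)) s
  | zero => rw [map_zero, zero_smul, zero_smul, map_zero]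
  | add c c' _ _ hc hc' => rw [map_add, add_smul, map_add, hc, hc', add_smul]
  | smul a c _ hc => rw [x.map_smul, smul_assoc, D.map_smul, hc, smul_assoc]

theorem apply_mem_ideal_span {D : S →ₗ[k] S} {T : Set S} (hD : ∀ t ∈ T, ∀ s, D (t * s) = t * D s)
    {s : S} (hs : s ∈ Ideal.span T) : D s ∈ Ideal.span T := by
  suffices h : ∀ a, D (a * s) ∈ Ideal.span T by simpa using h 1
  induction hs using Submodule.span_induction with
  | mem t ht =>
    intro a
    rw [mul_comm, hD t ht]
    exact Ideal.mul_mem_right _ _ (Ideal.subset_span ht)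
  | zero => simp
  | add s s' _ _ hs hs' =>
    intro a
    rw [mul_add, map_add]
    exact add_mem (hs a) (hs' a)
  | smul r s _ hs =>
    intro a
    rw [smul_eq_mul, ← mul_assoc]
    exact hs _

variable [Module.Free k V] [Module.Finite k V] [Finite ι] {b : Module.Basis ι k V}

theorem IsDivisionOperator.koszulD_comp {u : ι} {D : M →ₗ[k] M}
    (hD : IsDivisionOperator x b u D) (z : DualExterior k V →ₗ[k] M) :
    koszulD x (D ∘ₗ z) = D ∘ₗ koszulD x z -
      (z - x (b u) • D ∘ₗ z) ∘ₗ LinearMap.mulLeft k (ExteriorAlgebra.ι k (b.coord u)) := by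
  have := Fintype.ofFinite ι
  classical
  refine LinearMap.ext fun ω ↦ ?_
  have hne : ∀ j ∈ Finset.univ.erase u, D (x (b j) • z (ExteriorAlgebra.ι k (b.coord j) * ω)) =
      x (b j) • D (z (ExteriorAlgebra.ι k (b.coord j) * ω)) :=
    fun j hj ↦ hD.smul_of_ne (Finset.ne_of_mem_erase hj) _
  simp only [LinearMap.sub_apply, LinearMap.comp_apply, LinearMap.smul_apply,
    LinearMap.mulLeft_apply, koszulD_apply x b, map_sum]
  rw [← Finset.add_sum_erase _ _ (Finset.mem_univ u), ← Finset.add_sum_erase _ (fun j ↦ D _)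
    (Finset.mem_univ u), Finset.sum_congr rfl hne, hD.smul_self]
  abel

theorem IsDivisionOperator.sub_koszulD {u : ι} {D : M →ₗ[k] M} (hD : IsDivisionOperator x b u D)
    {z : DualExterior k V →ₗ[k] M} (hz : koszulD x z = 0) :
    z - koszulD x (D ∘ₗ z ∘ₗ contract (b u)) =
      (z - x (b u) • D ∘ₗ z) ∘ₗ contract (b u) ∘ₗ
        LinearMap.mulLeft k (ExteriorAlgebra.ι k (b.coord u)) := by
  rw [← LinearMap.comp_assoc, koszulD_comp_contract, hD.koszulD_comp, hz]
  refine LinearMap.ext fun ω ↦ ?_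
  have : b.coord u (b u) = 1 := by simp
  simp only [LinearMap.sub_apply, LinearMap.comp_apply, LinearMap.mulLeft_apply,
    contract_ι_mul, this, one_smul, map_sub, LinearMap.smul_apply, LinearMap.zero_apply, map_zero]
  abel

theorem IsDivisionOperator.exists_reduced_cycle {u : ι} {D : M →ₗ[k] M}
    (hD : IsDivisionOperator x b u D) {W₀ W₁ : Submodule k M} (hDW : ∀ s ∈ W₁, D s ∈ W₀)
    (hu : ∀ s ∈ W₀, x (b u) • s ∈ W₁) {z : DualExterior k V →ₗ[k] M} (hz : z ∈ koszulCycles x W₁) :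
    ∃ z' ∈ koszulCycles x W₁, z - z' ∈ koszulBoundaries x W₀ ∧
      (∀ ω, z' (ExteriorAlgebra.ι k (b.coord u) * ω) = 0) ∧
      ∀ t ≠ u, (∀ ω, z (ExteriorAlgebra.ι k (b.coord t) * ω) = 0) →
        ∀ ω, z' (ExteriorAlgebra.ι k (b.coord t) * ω) = 0 := by
  obtain ⟨hzW, hz : koszulD x z = 0⟩ := hz
  have hz' := hD.sub_koszulD hz
  set z' := z - koszulD x (D ∘ₗ z ∘ₗ contract (b u)) with hz'_def
  have hz'_apply (ω) : z' ω = (z - x (b u) • D ∘ₗ z)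
      (contract (b u) (ExteriorAlgebra.ι k (b.coord u) * ω)) := LinearMap.congr_fun hz' ω
  refine ⟨z', ⟨fun ω ↦ ?_, ?_⟩, ⟨D ∘ₗ z ∘ₗ contract (b u), fun ω ↦ hDW _ (hzW _), ?_⟩,
    fun ω ↦ ?_, fun t ht hzt ω ↦ ?_⟩
  · rw [hz'_apply]
    exact sub_mem (hzW _) (hu _ (hDW _ (hzW _)))
  · change koszulD x z' = 0
    rw [hz'_def, map_sub, hz, koszulD_koszulD, sub_zero]
  · rw [hz'_def, sub_sub_cancel]
    rfl
  · rw [hz'_apply, ← mul_assoc, ExteriorAlgebra.ι_sq_zero, zero_mul, map_zero, map_zero]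
  · have hcomm : contract (b u) (ExteriorAlgebra.ι k (b.coord u) *
        (ExteriorAlgebra.ι k (b.coord t) * ω)) = ExteriorAlgebra.ι k (b.coord t) *
          contract (b u) (ExteriorAlgebra.ι k (b.coord u) * ω) := by
      have ht0 : b.coord t (b u) = 0 := by simp [ht]
      rw [← mul_assoc, ι_mul_ι_anticomm, neg_mul, map_neg, mul_assoc, contract_ι_mul, ht0,
        zero_smul, zero_sub, neg_neg]
    rw [hz'_apply, hcomm, LinearMap.sub_apply, LinearMap.smul_apply, LinearMap.comp_apply, hzt,
      map_zero, smul_zero, sub_zero]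

theorem exists_reduced_cycle (U : Finset ι) {W₀ W₁ : Submodule k M}
    (hD : ∀ u ∈ U, ∃ D : M →ₗ[k] M, IsDivisionOperator x b u D ∧ ∀ s ∈ W₁, D s ∈ W₀)
    (hU : ∀ u ∈ U, ∀ s ∈ W₀, x (b u) • s ∈ W₁)
    {z : DualExterior k V →ₗ[k] M} (hz : z ∈ koszulCycles x W₁) :
    ∃ z' ∈ koszulCycles x W₁, z - z' ∈ koszulBoundaries x W₀ ∧
      ∀ u ∈ U, ∀ ω, z' (ExteriorAlgebra.ι k (b.coord u) * ω) = 0 := by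
  classical
  induction U using Finset.induction_on with
  | empty => exact ⟨z, hz, by simp, by simp⟩
  | insert u U _ ih =>
    obtain ⟨z₁, hz₁, hzz₁, hz₁U⟩ := ih (fun t ht ↦ hD t (Finset.mem_insert_of_mem ht))
      fun t ht ↦ hU t (Finset.mem_insert_of_mem ht)
    obtain ⟨D, hD, hDW⟩ := hD u (Finset.mem_insert_self u U)
    obtain ⟨z₂, hz₂, hz₁z₂, hz₂u, hz₂U⟩ :=
      hD.exists_reduced_cycle hDW (hU u (Finset.mem_insert_self u U)) hz₁
    refine ⟨z₂, hz₂, ?_, fun t ht ↦ ?_⟩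
    · simpa using add_mem hzz₁ hz₁z₂
    · by_cases htu : t = u
      · exact htu ▸ hz₂u
      · exact hz₂U t htu (hz₁U t (Finset.mem_of_mem_insert_of_ne ht htu))

theorem comp_mulLeft_mem_koszulBoundaries {W : Submodule k M} {z : DualExterior k V →ₗ[k] M}
    (hz : z ∈ koszulBoundaries x W) (m : DualExterior k V) :
    z ∘ₗ LinearMap.mulLeft k m ∈ koszulBoundaries x W := by
  obtain ⟨w, hw, rfl⟩ := hz
  refine ⟨w ∘ₗ LinearMap.mulLeft k (CliffordAlgebra.involute m), fun ω ↦ hw _, ?_⟩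
  change koszulD x _ = _
  rw [koszulD_comp_mulLeft, CliffordAlgebra.involute_involute]
  rfl

/-- After removing the directions outside `a :: l`, the cycle equation evaluated at
`coordProd b l * ω` has the single term `x (b a) • z (coordProd b (a :: l) * ω)`. -/
theorem coordProd_mem_koszulAnnihilator {W₀ W₁ : Submodule k M}
    {a : ι} {l : List ι} (ha : ∀ s : M, x (b a) • s = 0 → s = 0)
    (hD : ∀ u ∉ a :: l, ∃ D : M →ₗ[k] M, IsDivisionOperator x b u D ∧ ∀ s ∈ W₁, D s ∈ W₀)
    (hW : ∀ u ∉ a :: l, ∀ s ∈ W₀, x (b u) • s ∈ W₁) :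
    coordProd b (a :: l) ∈ koszulAnnihilator x W₀ W₁ := by
  classical
  have := Fintype.ofFinite ι
  intro z hz
  obtain ⟨z', ⟨-, hz' : koszulD x z' = 0⟩, hzz', hz'U⟩ :=
    exists_reduced_cycle (a :: l).toFinsetᶜ (fun u hu ↦ hD u (by simpa using hu))
      (fun u hu ↦ hW u (by simpa using hu)) hz
  have hzero : z' ∘ₗ LinearMap.mulLeft k (coordProd b (a :: l)) = 0 := by
    refine LinearMap.ext fun ω ↦ ha _ ?_
    have heq := LinearMap.congr_fun hz' (coordProd b l * ω)
    rw [koszulD_apply x b, Finset.sum_eq_single_of_mem a (Finset.mem_univ a)] at heq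
    · simpa [coordProd_cons, mul_assoc] using heq
    · intro j _ hja
      by_cases hj : j ∈ l
      · rw [← mul_assoc, ι_coord_mul_coordProd b hj, zero_mul, map_zero, smul_zero]
      · rw [hz'U j (by simp [hja, hj]), smul_zero]
  rw [← sub_add_cancel z z', LinearMap.add_comp, hzero, add_zero]
  exact comp_mulLeft_mem_koszulBoundaries hzz' _

end DivisionOperators
end KoszulComplex

section DivisionByVariables
variable {k σ : Type*} [CommRing k]

/-- Truncated division by the variable `X u`: it forgets the monomials not divisible by `X u`. -/
noncomputable def divX (u : σ) : MvPolynomial σ k →ₗ[k] MvPolynomial σ k where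
  toFun p := p.divMonomial (Finsupp.single u 1)
  map_add' p q := add_divMonomial p q _
  map_smul' a p := by
    ext m
    simp [coeff_divMonomial]

theorem coeff_divX (u : σ) (p : MvPolynomial σ k) (m : σ →₀ ℕ) :
    coeff m (divX u p) = coeff (Finsupp.single u 1 + m) p :=
  coeff_divMonomial _ p m

theorem divX_X_mul (u : σ) (p : MvPolynomial σ k) : divX u (X u * p) = p :=
  X_mul_divMonomial u p

theorem divX_X_mul_of_ne {u j : σ} (hj : j ≠ u) (p : MvPolynomial σ k) :
    divX u (X j * p) = X j * divX u p := by
  classical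
  ext m
  rw [coeff_divX, coeff_X_mul', coeff_X_mul', coeff_divX]
  have hmem : j ∈ (Finsupp.single u 1 + m).support ↔ j ∈ m.support := by
    simp [hj.symm]
  simp only [hmem]
  split_ifs with hjm
  · rw [add_tsub_assoc_of_le]
    simpa [Nat.one_le_iff_ne_zero] using hjm
  · rfl

theorem isHomogeneous_divX (u : σ) {p : MvPolynomial σ k} {q : ℕ} (hp : p.IsHomogeneous (q + 1)) :
    (divX u p).IsHomogeneous q := by
  intro m hm
  rw [coeff_divX] at hm
  have hdeg := hp hm
  rw [map_add, Finsupp.weight_single, Pi.one_apply, smul_eq_mul, mul_one, add_comm] at hdeg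
  exact Nat.succ_injective hdeg

end DivisionByVariables

section LinearForms
variable {k σ : Type*} [CommRing k]

theorem isHomogeneous_algHom {τ : Type*} {f : MvPolynomial σ k →ₐ[k] MvPolynomial τ k}
    (hf : ∀ i, (f (X i)).IsHomogeneous 1) {p : MvPolynomial σ k} {q : ℕ}
    (hp : p.IsHomogeneous q) : (f p).IsHomogeneous q := by
  rw [aeval_unique f]
  exact one_mul q ▸ hp.aeval _ hf

variable [Fintype σ]

/-- The linear form with a given vector of coefficients. -/
noncomputable def linearForm : (σ → k) →ₗ[k] MvPolynomial σ k :=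
  Fintype.linearCombination k X

theorem linearForm_basisFun (i : σ) : linearForm (Pi.basisFun k σ i) = X i := by
  classical
  rw [Pi.basisFun_apply, linearForm, Fintype.linearCombination_apply_single, one_smul]

theorem range_linearForm :
    LinearMap.range (linearForm : (σ → k) →ₗ[k] _) = homogeneousSubmodule σ k 1 := by
  rw [linearForm, Fintype.range_linearCombination, homogeneousSubmodule_one_eq_span_X]

theorem isHomogeneous_linearForm (c : σ → k) : (linearForm c).IsHomogeneous 1 :=
  range_linearForm.le ⟨c, rfl⟩

theorem linearForm_injective : Function.Injective (linearForm : (σ → k) → MvPolynomial σ k) :=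
  linearIndependent_iff_injective_fintypeLinearCombination.1 (linearIndependent_X σ k)

theorem linearForm_smul_mem {M : Type*} [AddCommGroup M] [Module k M]
    [Module (MvPolynomial σ k) M] {ℳ : ℕ → Submodule k M}
    [SetLike.GradedSMul (homogeneousSubmodule σ k) ℳ] {c : σ → k} {q : ℕ} {s : M}
    (hs : s ∈ ℳ q) : linearForm c • s ∈ ℳ (q + 1) := by
  have hdeg : linearForm c • s ∈ ℳ (1 +ᵥ q) :=
    SetLike.GradedSMul.smul_mem (A := homogeneousSubmodule σ k) (isHomogeneous_linearForm c) hs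
  rwa [vadd_eq_add, add_comm] at hdeg

/-- The linear change of variables whose new variables are the linear forms of a basis. -/
noncomputable def linearFormEquiv {κ : Type*} (b : Module.Basis κ k (σ → k)) :
    MvPolynomial κ k ≃ₐ[k] MvPolynomial σ k :=
  (SymmetricAlgebra.equivMvPolynomial b).symm.trans
    (SymmetricAlgebra.equivMvPolynomial (Pi.basisFun k σ))

theorem equivMvPolynomial_basisFun_ι (c : σ → k) :
    SymmetricAlgebra.equivMvPolynomial (Pi.basisFun k σ) (SymmetricAlgebra.ι k _ c) =
      linearForm c := by
  refine LinearMap.congr_fun (f := (SymmetricAlgebra.equivMvPolynomial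
    (Pi.basisFun k σ)).toLinearMap ∘ₗ SymmetricAlgebra.ι k _) ((Pi.basisFun k σ).ext fun i ↦ ?_) c
  rw [linearForm_basisFun]
  exact SymmetricAlgebra.equivMvPolynomial_ι_apply _ i

theorem isHomogeneous_equivMvPolynomial_ι {κ V : Type*} [AddCommGroup V] [Module k V]
    (b : Module.Basis κ k V) (v : V) :
    (SymmetricAlgebra.equivMvPolynomial b (SymmetricAlgebra.ι k V v)).IsHomogeneous 1 := by
  have hspan : Submodule.span k (Set.range b) ≤ (homogeneousSubmodule κ k 1).comap
      ((SymmetricAlgebra.equivMvPolynomial b).toLinearMap ∘ₗ SymmetricAlgebra.ι k V) := by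
    rw [Submodule.span_le]
    rintro _ ⟨i, rfl⟩
    change (SymmetricAlgebra.equivMvPolynomial b _).IsHomogeneous 1
    rw [SymmetricAlgebra.equivMvPolynomial_ι_apply]
    exact isHomogeneous_X k i
  exact hspan (b.mem_span v)

theorem linearFormEquiv_X {κ : Type*} (b : Module.Basis κ k (σ → k)) (j : κ) :
    linearFormEquiv b (X j) = linearForm (b j) := by
  rw [linearFormEquiv, AlgEquiv.trans_apply, SymmetricAlgebra.equivMvPolynomial_symm_X,
    equivMvPolynomial_basisFun_ι]

theorem linearFormEquiv_symm_X {κ : Type*} (b : Module.Basis κ k (σ → k)) (i : σ) :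
    (linearFormEquiv b).symm (X i) =
      SymmetricAlgebra.equivMvPolynomial b (SymmetricAlgebra.ι k _ (Pi.basisFun k σ i)) := by
  simp [linearFormEquiv]

theorem exists_isDivisionOperator_linearForm {κ : Type*} (b : Module.Basis κ k (σ → k)) (u : κ) :
    ∃ D : MvPolynomial σ k →ₗ[k] MvPolynomial σ k, IsDivisionOperator linearForm b u D ∧
      ∀ q, ∀ s ∈ homogeneousSubmodule σ k (q + 1), D s ∈ homogeneousSubmodule σ k q := by
  let e := linearFormEquiv b
  have hsymm (j) : e.symm (linearForm (b j)) = X j := by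
    rw [← linearFormEquiv_X, AlgEquiv.symm_apply_apply]
  refine ⟨e.toLinearMap ∘ₗ divX u ∘ₗ e.symm.toLinearMap, ⟨fun s ↦ ?_, fun {j} hj s ↦ ?_⟩,
    fun q s hs ↦ ?_⟩
  · change e (divX u (e.symm (linearForm (b u) * s))) = s
    rw [map_mul, hsymm, divX_X_mul, AlgEquiv.apply_symm_apply]
  · change e (divX u (e.symm (linearForm (b j) * s))) = linearForm (b j) * e (divX u (e.symm s))
    rw [map_mul, hsymm, divX_X_mul_of_ne hj, map_mul, linearFormEquiv_X]
  · refine isHomogeneous_algHom (f := e.toAlgHom) (fun j ↦ ?_) (isHomogeneous_divX u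
      (isHomogeneous_algHom (f := e.symm.toAlgHom) (fun i ↦ ?_) hs))
    · exact linearFormEquiv_X b j ▸ isHomogeneous_linearForm _
    · exact linearFormEquiv_symm_X b i ▸ isHomogeneous_equivMvPolynomial_ι b _

end LinearForms

section KoszulRegularity
variable {k σ M : Type*} [CommRing k] [AddCommGroup M] [Module k M] [Module (MvPolynomial σ k) M]
  [IsScalarTower k (MvPolynomial σ k) M]

/-- The degree `q` part of a graded submodule of a module with grading `ℳ`. -/
noncomputable def gradedPart (N : Submodule (MvPolynomial σ k) M) (ℳ : ℕ → Submodule k M) (q : ℕ) :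
    Submodule k M :=
  N.restrictScalars k ⊓ ℳ q

variable [Fintype σ]

theorem smul_mem_gradedPart {N N' : Submodule (MvPolynomial σ k) M} {ℳ : ℕ → Submodule k M}
    [SetLike.GradedSMul (homogeneousSubmodule σ k) ℳ] {c : σ → k}
    (hc : ∀ s ∈ N, linearForm c • s ∈ N') {q : ℕ} {s : M} (hs : s ∈ gradedPart N ℳ q) :
    linearForm c • s ∈ gradedPart N' ℳ (q + 1) :=
  ⟨hc s hs.1, linearForm_smul_mem hs.2⟩

/-- Regularity of a graded submodule `N` measured by Koszul homology: the Koszul complex of the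
variables with coefficients in `N` is exact in all internal degrees `> r`. Since a cycle with
values in degree `q + 1` and exterior degree `i` has total degree `q + 1 + i`, this says that
`Torᵢ(N, k)` vanishes in degrees `> r + i`. -/
def IsKoszulRegular (N : Submodule (MvPolynomial σ k) M) (ℳ : ℕ → Submodule k M) (r : ℕ) : Prop :=
  ∀ q ≥ r, IsKoszulExact (linearForm (k := k) (σ := σ)) (gradedPart N ℳ q) (gradedPart N ℳ (q + 1))

theorem constChain_mem_koszulBoundaries {q : ℕ} {f : MvPolynomial σ k}
    (hf : f ∈ homogeneousSubmodule σ k (q + 1)) :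
    (constChain f : DualExterior k (σ → k) →ₗ[k] MvPolynomial σ k) ∈
      koszulBoundaries linearForm (homogeneousSubmodule σ k q) := by
  rw [← homogeneousSubmodule_one_pow, pow_succ'] at hf
  induction hf using Submodule.mul_induction_on' with
  | mem_mul_mem l hl g hg =>
    rw [homogeneousSubmodule_one_pow] at hg
    obtain ⟨c, rfl⟩ : l ∈ LinearMap.range linearForm := range_linearForm.ge hl
    have hgc : (constChain g : DualExterior k (σ → k) →ₗ[k] _) ∘ₗ contract c ∈
        koszulChains (homogeneousSubmodule σ k q) :=
      fun ω ↦ (homogeneousSubmodule σ k q).smul_mem _ hg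
    rw [← smul_eq_mul, ← koszulD_constChain_comp_contract]
    exact Submodule.mem_map_of_mem hgc
  | add f _ g _ hf hg =>
    rw [constChain_add]
    exact add_mem hf hg

theorem isKoszulExact_homogeneousSubmodule (q : ℕ) :
    IsKoszulExact (linearForm (k := k) (σ := σ)) (homogeneousSubmodule σ k q)
      (homogeneousSubmodule σ k (q + 1)) := by
  intro z hz
  let b := Pi.basisFun k σ
  obtain ⟨z', ⟨hz'W, -⟩, hzz', hz'⟩ := exists_reduced_cycle (b := b)
    (W₀ := homogeneousSubmodule σ k q) Finset.univ
    (fun u _ ↦ (exists_isDivisionOperator_linearForm b u).imp fun D hD ↦ ⟨hD.1, hD.2 q⟩)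
    (fun u _ s hs ↦ add_comm 1 q ▸ (isHomogeneous_linearForm (b u)).mul hs) hz
  have hz'ι (v : Module.Dual k (σ → k)) (ω) : z' (ExteriorAlgebra.ι k v * ω) = 0 := by
    rw [← b.sum_dual_apply_smul_coord v, map_sum, Finset.sum_mul, map_sum]
    refine Finset.sum_eq_zero fun j hj ↦ ?_
    rw [map_smul, smul_mul_assoc, map_smul, hz' j hj, smul_zero]
  rw [← sub_add_cancel z z', eq_constChain hz'ι]
  exact add_mem (eq_constChain hz'ι ▸ hzz') (constChain_mem_koszulBoundaries (hz'W 1))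

theorem isKoszulRegular_top (r : ℕ) :
    IsKoszulRegular (⊤ : Ideal (MvPolynomial σ k)) (homogeneousSubmodule σ k) r := fun q _ ↦ by
  simpa [gradedPart] using isKoszulExact_homogeneousSubmodule q

theorem isKoszulRegular_bot (ℳ : ℕ → Submodule k M) (r : ℕ) :
    IsKoszulRegular (⊥ : Submodule (MvPolynomial σ k) M) ℳ r := by
  rintro q - z ⟨hz, -⟩
  have : z = 0 := LinearMap.ext fun ω ↦ (hz ω).1
  exact this ▸ zero_mem _

end KoszulRegularity

section SubspaceArrangements

theorem exists_basis_span_image {K V : Type*} [Field K] [AddCommGroup V] [Module K V] (T : Set V) :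
    ∃ (κ : Set V) (b : Module.Basis κ K V) (A : Set κ),
      b '' A ⊆ T ∧ T ⊆ Submodule.span K (b '' A) := by
  obtain ⟨B, hBT, hTB, hB⟩ := exists_linearIndependent K T
  have hB : LinearIndepOn K id B := hB
  refine ⟨_, Module.Basis.extend hB, Subtype.val ⁻¹' B, ?_⟩
  have himage : Module.Basis.extend hB '' (Subtype.val ⁻¹' B) = B := by
    rw [Module.Basis.coe_extend, Subtype.image_preimage_coe,
      Set.inter_eq_right.2 (hB.subset_extend _)]
  rw [himage, hTB]
  exact ⟨hBT, Submodule.subset_span⟩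

variable {k σ α : Type*} [Field k] [Fintype σ]

/-- The ideal generated by the linear forms with coefficient vector in `P`. -/
noncomputable def linearIdeal (P : Submodule k (σ → k)) : Ideal (MvPolynomial σ k) :=
  Ideal.span (linearForm '' P)

theorem linearForm_mem_linearIdeal {P : Submodule k (σ → k)} {c : σ → k} (hc : c ∈ P) :
    linearForm c ∈ linearIdeal P :=
  Ideal.subset_span ⟨c, hc, rfl⟩

theorem linearIdeal_bot : linearIdeal (⊥ : Submodule k (σ → k)) = ⊥ := by
  simp [linearIdeal]

theorem isHomogeneous_linearIdeal (P : Submodule k (σ → k)) :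
    (linearIdeal P).IsHomogeneous (homogeneousSubmodule σ k) := by
  refine Ideal.homogeneous_span _ _ ?_
  rintro _ ⟨c, -, rfl⟩
  exact ⟨1, isHomogeneous_linearForm c⟩

theorem IsDivisionOperator.apply_mem_linearIdeal {κ : Type*} {b : Module.Basis κ k (σ → k)} {u : κ}
    {D : MvPolynomial σ k →ₗ[k] MvPolynomial σ k} (hD : IsDivisionOperator linearForm b u D)
    {A : Set κ} (hu : u ∉ A) {P : Submodule k (σ → k)} (hP : P ≤ Submodule.span k (b '' A))
    {s : MvPolynomial σ k} (hs : s ∈ linearIdeal P) : D s ∈ linearIdeal P := by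
  refine apply_mem_ideal_span ?_ hs
  rintro _ ⟨c, hc, rfl⟩ s
  exact hD.smul_of_mem_span hu (hP hc) s

theorem linearForm_mul_mem_iInf [DecidableEq α] {s : Finset α} (P : α → Submodule k (σ → k))
    {i : α} {c : σ → k} (hc : c ∈ P i) {f : MvPolynomial σ k}
    (hf : f ∈ ⨅ j ∈ s.erase i, linearIdeal (P j)) :
    linearForm c * f ∈ ⨅ j ∈ s, linearIdeal (P j) := by
  simp only [Ideal.mem_iInf] at hf ⊢
  intro j hj
  by_cases hji : j = i
  · exact Ideal.mul_mem_right _ _ (linearForm_mem_linearIdeal (hji ▸ hc))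
  · exact Ideal.mul_mem_left _ _ (hf j (Finset.mem_erase.2 ⟨hji, hj⟩))

theorem isKoszulExact_iInf [DecidableEq α] {s : Finset α} {P : α → Submodule k (σ → k)}
    {κ : Type*} {b : Module.Basis κ k (σ → k)} {a : κ} {l : List κ} (hl : (a :: l).Nodup)
    (hbP : ∀ j ∈ a :: l, ∃ i ∈ s, b j ∈ P i)
    (hPb : ∀ i ∈ s, P i ≤ Submodule.span k (b '' {j | j ∈ a :: l})) {q : ℕ}
    (hq : ∀ i ∈ s, ∀ p ≥ q, IsKoszulExact (linearForm (k := k) (σ := σ))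
      (gradedPart (⨅ j ∈ s.erase i, linearIdeal (P j)) (homogeneousSubmodule σ k) p)
      (gradedPart (⨅ j ∈ s.erase i, linearIdeal (P j)) (homogeneousSubmodule σ k) (p + 1))) :
    IsKoszulExact (linearForm (k := k) (σ := σ))
      (gradedPart (⨅ i ∈ s, linearIdeal (P i)) (homogeneousSubmodule σ k) (q + 1))
      (gradedPart (⨅ i ∈ s, linearIdeal (P i)) (homogeneousSubmodule σ k) (q + 1 + 1)) := by
  have := Module.Finite.finite_basis b
  refine isKoszulExact_of_one_mem (one_mem_koszulAnnihilator_of_coordProd_mem b hl ?_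
    (coordProd_mem_koszulAnnihilator (fun f hf ↦ ?_) (fun u hu ↦ ?_) fun u _ f hf ↦ ?_))
  · intro j hj
    obtain ⟨i, hi, hji⟩ := hbP j hj
    have hle : (⨅ j ∈ s, linearIdeal (P j)) ≤ ⨅ j ∈ s.erase i, linearIdeal (P j) :=
      biInf_mono fun j hj ↦ Finset.mem_of_mem_erase hj
    exact ⟨_, _, _, inf_le_inf_right _ hle, inf_le_inf_right _ hle,
      fun f ↦ smul_mem_gradedPart fun f ↦ linearForm_mul_mem_iInf P hji,
      fun f ↦ smul_mem_gradedPart fun f ↦ linearForm_mul_mem_iInf P hji,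
      hq i hi q le_rfl, hq i hi (q + 1) (Nat.le_succ q)⟩
  · refine (mul_eq_zero.1 hf).resolve_left fun hba ↦ b.ne_zero a ?_
    exact linearForm_injective (hba.trans (map_zero linearForm).symm)
  · obtain ⟨D, hD, hDdeg⟩ := exists_isDivisionOperator_linearForm b u
    refine ⟨D, hD, fun f hf ↦ ⟨?_, hDdeg _ f hf.2⟩⟩
    have hfJ : f ∈ ⨅ i ∈ s, linearIdeal (P i) := hf.1
    change D f ∈ ⨅ i ∈ s, linearIdeal (P i)
    simp only [Ideal.mem_iInf] at hfJ ⊢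
    exact fun i hi ↦ hD.apply_mem_linearIdeal hu (hPb i hi) (hfJ i hi)
  · exact smul_mem_gradedPart (fun f hf ↦ Ideal.mul_mem_left _ _ hf) hf

theorem isKoszulRegular_iInf_succ [DecidableEq α] {s : Finset α} (hs : s.Nonempty)
    {P : α → Submodule k (σ → k)} {r : ℕ}
    (hr : ∀ i ∈ s,
      IsKoszulRegular (⨅ j ∈ s.erase i, linearIdeal (P j)) (homogeneousSubmodule σ k) r) :
    IsKoszulRegular (⨅ i ∈ s, linearIdeal (P i)) (homogeneousSubmodule σ k) (r + 1) := by
  obtain ⟨κ, b, A, hAP, hPA⟩ := exists_basis_span_image (K := k) (⋃ i ∈ s, (P i : Set (σ → k)))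
  have hP (i) (hi : i ∈ s) : P i ≤ Submodule.span k (b '' A) :=
    (Set.subset_biUnion_of_mem (u := fun i ↦ (P i : Set (σ → k))) hi).trans hPA
  have := Module.Finite.finite_basis b
  obtain ⟨A, rfl⟩ := A.toFinite.exists_finset_coe
  rcases hA : A.toList with _ | ⟨a, l⟩
  · obtain ⟨i, hi⟩ := hs
    have hPi : P i = ⊥ := by simpa [Finset.toList_eq_nil.1 hA] using hP i hi
    have hbot : (⨅ i ∈ s, linearIdeal (P i)) = ⊥ :=
      eq_bot_iff.2 ((iInf₂_le i hi).trans (by rw [hPi, linearIdeal_bot]))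
    exact hbot ▸ isKoszulRegular_bot _ _
  · have hmem (j : κ) : j ∈ a :: l ↔ j ∈ A := by rw [← hA, Finset.mem_toList]
    intro q' hq'
    obtain ⟨q, rfl⟩ := Nat.exists_eq_add_of_le' (Nat.one_le_of_lt hq')
    refine isKoszulExact_iInf (b := b) (hA ▸ A.nodup_toList) (fun j hj ↦ ?_) (fun i hi ↦ ?_)
      fun i hi p hp ↦ hr i hi p (by omega)
    · simpa using hAP ⟨j, (hmem j).1 hj, rfl⟩
    · simpa only [hmem, Finset.setOfPred_mem] using hP i hi

theorem isKoszulRegular_iInf_linearIdeal (s : Finset α) (P : α → Submodule k (σ → k)) :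
    IsKoszulRegular (⨅ i ∈ s, linearIdeal (P i)) (homogeneousSubmodule σ k) s.card := by
  classical
  induction hd : s.card generalizing s with
  | zero => simpa [Finset.card_eq_zero.1 hd] using isKoszulRegular_top 0
  | succ d ih =>
    refine isKoszulRegular_iInf_succ (Finset.card_pos.1 (by omega)) fun i hi ↦ ih _ ?_
    rw [Finset.card_erase_of_mem hi, hd, Nat.add_sub_cancel]

end SubspaceArrangements

section GradedModules
variable {k S M N γ : Type*} [CommRing k] [CommRing S]
  [AddCommGroup M] [Module k M] [Module S M] [AddCommGroup N] [Module k N] [Module S N]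
  [DecidableEq γ] {ℳ : γ → Submodule k M} {𝒩 : γ → Submodule k N}
  [DirectSum.Decomposition ℳ] [DirectSum.Decomposition 𝒩]

theorem decompose_apply {δ : M →ₗ[S] N} (hδ : ∀ q, ∀ s ∈ ℳ q, δ s ∈ 𝒩 q) (s : M) (q : γ) :
    (DirectSum.decompose 𝒩 (δ s) q : N) = δ (DirectSum.decompose ℳ s q) := by
  induction s using DirectSum.Decomposition.inductionOn ℳ with
  | zero => simp
  | @homogeneous p s =>
    by_cases hpq : p = q
    · subst hpq
      rw [DirectSum.decompose_of_mem_same 𝒩 (hδ _ _ s.2), DirectSum.decompose_of_mem_same ℳ s.2]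
    · rw [DirectSum.decompose_of_mem_ne 𝒩 (hδ _ _ s.2) hpq,
        DirectSum.decompose_of_mem_ne ℳ s.2 hpq, map_zero]
  | add s t hs ht => simp [hs, ht]

theorem isHomogeneous_ker {δ : M →ₗ[S] N} (hδ : ∀ q, ∀ s ∈ ℳ q, δ s ∈ 𝒩 q) :
    (LinearMap.ker δ).IsHomogeneous ℳ := by
  intro q s hs
  rw [LinearMap.mem_ker] at hs ⊢
  rw [← decompose_apply hδ, hs, DirectSum.decompose_zero]
  rfl

theorem range_inf_le_map [Algebra k S] [IsScalarTower k S M] [IsScalarTower k S N]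
    {δ : M →ₗ[S] N} (hδ : ∀ q, ∀ s ∈ ℳ q, δ s ∈ 𝒩 q) (q : γ) :
    (LinearMap.range δ).restrictScalars k ⊓ 𝒩 q ≤ (ℳ q).map (δ.restrictScalars k) := by
  rintro _ ⟨⟨s, rfl⟩, hs⟩
  refine ⟨DirectSum.decompose ℳ s q, SetLike.coe_mem _, ?_⟩
  exact (decompose_apply hδ s q).symm.trans (DirectSum.decompose_of_mem_same 𝒩 hs)

end GradedModules

section FreeModules
variable {k σ ι M : Type*} [CommRing k]

/-- The grading of the free module `⨁ᵦ S(-e β)` with generators in degrees `e β`. -/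
noncomputable def freeGrading (e : ι → ℕ) (q : ℕ) : Submodule k (ι → MvPolynomial σ k) :=
  Submodule.pi Set.univ fun β ↦ if e β ≤ q then homogeneousSubmodule σ k (q - e β) else ⊥

theorem mem_freeGrading {e : ι → ℕ} {q : ℕ} {f : ι → MvPolynomial σ k} :
    f ∈ freeGrading e q ↔
      ∀ β, f β = 0 ∨ e β ≤ q ∧ f β ∈ homogeneousSubmodule σ k (q - e β) := by
  refine Submodule.mem_pi.trans (forall_congr' fun β ↦ ?_)
  by_cases hβ : e β ≤ q
  · simp only [Set.mem_univ, hβ, if_true, true_and, forall_const, iff_or_self]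
    exact fun h ↦ h ▸ zero_mem _
  · simp [hβ]

theorem single_mem_freeGrading [DecidableEq ι] (e : ι → ℕ) (β : ι) {p : ℕ} {s : MvPolynomial σ k}
    (hs : s ∈ homogeneousSubmodule σ k p) :
    (Pi.single β s : ι → MvPolynomial σ k) ∈ freeGrading e (e β + p) := by
  refine mem_freeGrading.2 fun α ↦ ?_
  by_cases hα : α = β
  · subst hα
    exact .inr ⟨Nat.le_add_right _ _, by simpa using hs⟩
  · exact .inl (by simp [hα])

instance (e : ι → ℕ) :
    SetLike.GradedSMul (homogeneousSubmodule σ k) (freeGrading (k := k) (σ := σ) e) where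
  smul_mem {p q s f} hs hf := by
    refine mem_freeGrading.2 fun β ↦ (mem_freeGrading.1 hf β).imp (fun h ↦ ?_) fun ⟨hle, h⟩ ↦ ?_
    · rw [Pi.smul_apply, h, smul_zero]
    · rw [vadd_eq_add, Nat.add_sub_assoc hle]
      exact ⟨hle.trans (Nat.le_add_left q p), IsHomogeneous.mul hs h⟩

theorem isKoszulExact_freeGrading [Fintype σ] {e : ι → ℕ} {q : ℕ} (he : ∀ β, e β ≤ q) :
    IsKoszulExact (linearForm (k := k) (σ := σ))
      (freeGrading e q : Submodule k (ι → MvPolynomial σ k)) (freeGrading e (q + 1)) := by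
  refine isKoszulExact_pi _ fun β ↦ ?_
  simpa [he β, (he β).trans q.le_succ, Nat.sub_add_comm (he β)] using
    isKoszulExact_homogeneousSubmodule (q - e β)

variable [Fintype ι]

/-- The decomposition of an element of `⨁ᵦ S(-e β)` into its homogeneous components. -/
noncomputable def freeDecompose [DecidableEq ι] (e : ι → ℕ) :
    (ι → MvPolynomial σ k) →ₗ[k] DirectSum ℕ fun q ↦ freeGrading (σ := σ) (k := k) e q :=
  ∑ β, DirectSum.toModule k ℕ _ (fun p ↦ DirectSum.lof k ℕ _ (e β + p) ∘ₗ
      ((LinearMap.single k (fun _ ↦ MvPolynomial σ k) β).restrict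
        fun _ ↦ single_mem_freeGrading e β)) ∘ₗ
    (DirectSum.decomposeLinearEquiv (homogeneousSubmodule σ k)).toLinearMap ∘ₗ LinearMap.proj β

theorem freeDecompose_single [DecidableEq ι] (e : ι → ℕ) (β : ι) {p : ℕ} {s : MvPolynomial σ k}
    (hs : s ∈ homogeneousSubmodule σ k p) :
    freeDecompose e (Pi.single β s) =
      DirectSum.lof k ℕ _ (e β + p) ⟨Pi.single β s, single_mem_freeGrading e β hs⟩ := by
  simp only [freeDecompose, LinearMap.sum_apply]
  rw [Finset.sum_eq_single β]
  · simp only [LinearMap.comp_apply, LinearMap.proj_apply, Pi.single_eq_same, LinearEquiv.coe_coe,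
      DirectSum.decomposeLinearEquiv_apply, DirectSum.decompose_of_mem _ hs]
    rw [← DirectSum.lof_eq_of k, DirectSum.toModule_lof]
    rfl
  · intro α _ hα
    simp [Pi.single_eq_of_ne hα]
  · simp

theorem freeDecompose_of_mem [DecidableEq ι] {e : ι → ℕ} {q : ℕ} {f : ι → MvPolynomial σ k}
    (hf : f ∈ freeGrading e q) : freeDecompose e f = DirectSum.lof k ℕ _ q ⟨f, hf⟩ := by
  have hβ (β) : ∃ h, freeDecompose e (Pi.single β (f β)) =
      DirectSum.lof k ℕ (fun q ↦ freeGrading e q) q ⟨Pi.single β (f β), h⟩ := by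
    obtain h0 | ⟨hle, hhom⟩ := mem_freeGrading.1 hf β
    · have : (Pi.single β (f β) : ι → MvPolynomial σ k) = 0 := by rw [h0, Pi.single_zero]
      simp only [this, map_zero]
      exact ⟨zero_mem _, (map_zero _).symm⟩
    · obtain ⟨p, rfl⟩ := Nat.exists_eq_add_of_le hle
      rw [Nat.add_sub_cancel_left] at hhom
      exact ⟨_, freeDecompose_single e β hhom⟩
  choose h hβ using hβ
  conv_lhs => rw [← Finset.univ_sum_single f]
  rw [map_sum, Finset.sum_congr rfl fun β _ ↦ hβ β, ← map_sum]
  congr 1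
  exact Subtype.ext ((AddSubmonoidClass.coe_finsetSum _ _).trans (Finset.univ_sum_single f))

noncomputable instance (e : ι → ℕ) : DirectSum.Decomposition (freeGrading (σ := σ) (k := k) e) := by
  classical
  refine .ofLinearMap _ (freeDecompose e) (LinearMap.pi_ext' fun β ↦ ?_) ?_
  · refine DirectSum.decompose_lhom_ext (homogeneousSubmodule σ k) fun p ↦ LinearMap.ext fun s ↦ ?_
    simp [freeDecompose_single e β s.2]
  · refine DirectSum.linearMap_ext k fun q ↦ LinearMap.ext fun f ↦ ?_
    simp [freeDecompose_of_mem f.2]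

theorem linearCombination_mem [AddCommGroup M] [Module k M] [Module (MvPolynomial σ k) M]
    {ℳ : ℕ → Submodule k M} [SetLike.GradedSMul (homogeneousSubmodule σ k) ℳ] {e : ι → ℕ}
    {g : ι → M} (hg : ∀ β, g β ∈ ℳ (e β)) {q : ℕ} {f : ι → MvPolynomial σ k}
    (hf : f ∈ freeGrading e q) : Fintype.linearCombination (MvPolynomial σ k) g f ∈ ℳ q := by
  rw [Fintype.linearCombination_apply]
  refine sum_mem fun β _ ↦ ?_
  obtain h | ⟨hle, h⟩ := mem_freeGrading.1 hf β
  · rw [h, zero_smul]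
    exact zero_mem _
  · have hdeg : f β • g β ∈ ℳ ((q - e β) +ᵥ e β) := SetLike.GradedSMul.smul_mem h (hg β)
    rwa [vadd_eq_add, Nat.sub_add_cancel hle] at hdeg

end FreeModules

section Resolutions

variable {k σ M : Type*} [Field k] [Fintype σ] [AddCommGroup M] [Module k M]
  [Module (MvPolynomial σ k) M] [IsScalarTower k (MvPolynomial σ k) M]
  {N : Submodule (MvPolynomial σ k) M} {ℳ : ℕ → Submodule k M} {r : ℕ}

theorem IsKoszulRegular.gradedPart_le_span (hN : IsKoszulRegular N ℳ r) (q : ℕ) :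
    (gradedPart N ℳ q : Set M) ⊆
      Submodule.span (MvPolynomial σ k) {s | ∃ p ≤ r, s ∈ gradedPart N ℳ p} := by
  induction q with
  | zero => exact fun s hs ↦ Submodule.subset_span ⟨0, r.zero_le, hs⟩
  | succ q ih =>
    by_cases hq : q + 1 ≤ r
    · exact fun s hs ↦ Submodule.subset_span ⟨q + 1, hq, hs⟩
    · exact fun s hs ↦ Submodule.span_le.2 ih ((hN q (by omega)).le_span hs)

variable [DirectSum.Decomposition ℳ]

theorem IsKoszulRegular.span_eq (hN : IsKoszulRegular N ℳ r) (hhom : N.IsHomogeneous ℳ) :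
    Submodule.span (MvPolynomial σ k) {s | ∃ p ≤ r, s ∈ gradedPart N ℳ p} = N := by
  classical
  refine le_antisymm (Submodule.span_le.2 fun s ⟨_, _, hs⟩ ↦ hs.1) fun s hs ↦ ?_
  rw [← DirectSum.sum_support_decompose ℳ s]
  exact sum_mem fun q _ ↦ hN.gradedPart_le_span q ⟨hhom q hs, SetLike.coe_mem _⟩

theorem IsKoszulRegular.exists_generators [IsNoetherian (MvPolynomial σ k) M]
    (hN : IsKoszulRegular N ℳ r) (hhom : N.IsHomogeneous ℳ) :
    ∃ (ρ : ℕ) (e : Fin ρ → ℕ) (g : Fin ρ → M), (∀ β, e β ≤ r) ∧ (∀ β, g β ∈ ℳ (e β)) ∧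
      Submodule.span (MvPolynomial σ k) (Set.range g) = N := by
  obtain ⟨T, hT, hspan⟩ := (Submodule.fg_span_iff_fg_span_finset_subset _).1
    (hN.span_eq hhom ▸ IsNoetherian.noetherian N)
  have hgen (β : Fin T.card) : ∃ p ≤ r, (T.equivFin.symm β : M) ∈ gradedPart N ℳ p :=
    hT (T.equivFin.symm β).2
  choose e her hge using hgen
  refine ⟨T.card, e, Subtype.val ∘ T.equivFin.symm, her, fun β ↦ (hge β).2, ?_⟩
  rw [T.equivFin.symm.surjective.range_comp, Subtype.range_coe, ← hspan, hN.span_eq hhom]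

theorem IsKoszulRegular.ker {ρ : ℕ} {e : Fin ρ → ℕ} (he : ∀ β, e β ≤ r)
    {δ : (Fin ρ → MvPolynomial σ k) →ₗ[MvPolynomial σ k] M}
    (hδ : ∀ q, ∀ f ∈ freeGrading e q, δ f ∈ ℳ q)
    (h : IsKoszulRegular (LinearMap.range δ) ℳ r) :
    IsKoszulRegular (LinearMap.ker δ) (freeGrading e) (r + 1) := by
  intro q' hq'
  obtain ⟨q, rfl⟩ := Nat.exists_eq_add_of_le' (Nat.one_le_of_lt hq')
  have hmap : (freeGrading e (q + 1)).map (δ.restrictScalars k) ≤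
      gradedPart (LinearMap.range δ) ℳ (q + 1) := by
    rintro _ ⟨f, hf, rfl⟩
    exact ⟨⟨f, rfl⟩, hδ _ f hf⟩
  exact isKoszulExact_ker (linearForm (k := k) (σ := σ)) (δ := δ) (fun _ _ ↦ linearForm_smul_mem)
    (range_inf_le_map hδ q) hmap (isKoszulExact_freeGrading fun β ↦ (he β).trans (by omega))
    (h q (by omega))

/-- A step of a graded free resolution: a graded submodule of a graded free module of finite rank
whose Koszul homology vanishes in degrees `> r`, ready to be covered by the next free module. -/
structure RegularSyzygies (k σ : Type*) [Field k] [Fintype σ] (r : ℕ) where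
  rank : ℕ
  degree : Fin rank → ℕ
  module : Submodule (MvPolynomial σ k) (Fin rank → MvPolynomial σ k)
  isHomogeneous : module.IsHomogeneous (freeGrading (k := k) degree)
  isKoszulRegular : IsKoszulRegular module (freeGrading degree) r

theorem IsKoszulRegular.exists_cover [SetLike.GradedSMul (homogeneousSubmodule σ k) ℳ]
    [IsNoetherian (MvPolynomial σ k) M]
    (hN : IsKoszulRegular N ℳ r) (hhom : N.IsHomogeneous ℳ) :
    ∃ (Z : RegularSyzygies k σ (r + 1))
      (δ : (Fin Z.rank → MvPolynomial σ k) →ₗ[MvPolynomial σ k] M),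
      LinearMap.range δ = N ∧ LinearMap.ker δ = Z.module ∧ (∀ β, Z.degree β ≤ r) ∧
        ∀ β, δ (Pi.single β 1) ∈ ℳ (Z.degree β) := by
  obtain ⟨ρ, e, g, he, hg, hspan⟩ := hN.exists_generators hhom
  let δ := Fintype.linearCombination (MvPolynomial σ k) g
  have hrange : LinearMap.range δ = N := by rw [Fintype.range_linearCombination, hspan]
  have hδ (q : ℕ) : ∀ f ∈ freeGrading e q, δ f ∈ ℳ q := fun f ↦ linearCombination_mem hg
  refine ⟨⟨ρ, e, LinearMap.ker δ, isHomogeneous_ker hδ, .ker he hδ (hrange ▸ hN)⟩, δ, hrange, rfl,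
    he, fun β ↦ ?_⟩
  simpa [δ, Fintype.linearCombination_apply_single] using hg β

end Resolutions

section Ideals
variable {k : Type*} [Field k] {n : ℕ}

theorem idealIsRegular_of_isKoszulRegular {J : Ideal (MvP k n)} {r : ℕ}
    (hhom : J.IsHomogeneous (homogeneousSubmodule (Fin (n + 1)) k))
    (hJ : IsKoszulRegular J (homogeneousSubmodule (Fin (n + 1)) k) r) : IdealIsRegular J r := by
  obtain ⟨Z₀, ε, hε, hεker, hdeg₀, hεhom⟩ := hJ.exists_cover hhom
  choose next δ hδ hδker hdeg hδhom using fun (r : ℕ) (Z : RegularSyzygies k (Fin (n + 1)) r) ↦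
    Z.isKoszulRegular.exists_cover Z.isHomogeneous
  let Z (i : ℕ) : RegularSyzygies k (Fin (n + 1)) (r + 1 + i) := Nat.rec Z₀ (fun _ ↦ next _) i
  refine ⟨fun i ↦ (Z i).rank, fun i ↦ (Z i).degree, fun i ↦ δ _ (Z i), ε, hε,
    hεker.trans (hδ _ Z₀).symm, fun i ↦ (hδker _ (Z i)).trans (hδ _ (Z (i + 1))).symm, hεhom,
    fun i β ↦ mem_freeGrading.1 (hδhom _ (Z i) β), fun i β ↦ ?_⟩
  cases i with
  | zero =>
    have hβ : (Z 0).degree β ≤ r := hdeg₀ β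
    simpa using hβ
  | succ i =>
    have hβ : (Z (i + 1)).degree β ≤ r + 1 + i := hdeg _ (Z i) β
    push_cast
    omega

theorem IsLinearIdeal.exists_eq_linearIdeal {I : Ideal (MvP k n)} (hI : IsLinearIdeal I) :
    ∃ P : Submodule k (Fin (n + 1) → k), I = linearIdeal P := by
  obtain ⟨T, hT, rfl⟩ := hI
  refine ⟨Submodule.span k (linearForm ⁻¹' T), le_antisymm (Ideal.span_le.2 fun f hf ↦ ?_)
    (Ideal.span_le.2 ?_)⟩
  · obtain ⟨c, rfl⟩ : f ∈ LinearMap.range linearForm := range_linearForm.ge (hT hf)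
    exact linearForm_mem_linearIdeal (Submodule.subset_span hf)
  · rw [Set.image_subset_iff]
    suffices h : Submodule.span k (linearForm ⁻¹' T) ≤
        ((Ideal.span T).restrictScalars k).comap linearForm from h
    exact Submodule.span_le.2 fun c hc ↦ Ideal.subset_span hc

end Ideals

/-- **Derksen–Sidman.** The defining ideal `I(X) = I_1 ∩ ⋯ ∩ I_d` of an arrangement `X` of
`d` linear subspaces of `ℙⁿ` (each `I_i` generated by linear forms, and not the irrelevant
ideal, so that it defines a nonempty linear subspace) is `d`-regular. -/
theorem regularity_of_subspace_arrangement {k : Type*} [Field k] {n d : ℕ} (hd : 0 < d)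
    (I : Fin d → Ideal (MvP k n))
    (hlin : ∀ i, IsLinearIdeal (I i))
    (hne : ∀ i, I i ≠ Ideal.span (Set.range X)) :
    IdealIsRegular (⨅ i, I i) (d : ℤ) := by
  choose P hP using fun i ↦ (hlin i).exists_eq_linearIdeal
  obtain rfl : I = fun i ↦ linearIdeal (P i) := funext hP
  refine idealIsRegular_of_isKoszulRegular
    (Ideal.IsHomogeneous.iInf fun i ↦ isHomogeneous_linearIdeal (P i)) ?_
  simpa using isKoszulRegular_iInf_linearIdeal Finset.univ P
end

section
/- Let S = k[x_0,...,x_n] with k an infinite field, let I_1,...,I_d be linear ideals (ideals generated by linear forms) of S, and let L be any linear ideal. Then the ideal I_1 ∩ ... ∩ I_d + L is d-regular. -/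
open MvPolynomial
attribute [local instance] MvPolynomial.gradedAlgebra

/-!
The criterion of Bayer and Stillman says that a homogeneous ideal `J` is `r`-regular as soon as
there are linear forms `x₁, …, xₘ` generating the irrelevant ideal such that each `xⱼ` is injective
on `S ⧸ (J + (x₁, …, xⱼ₋₁))` in degrees `≥ r`, and `J + (x₁, …, xₘ)` contains everything of degree
`≥ r`. The criterion bounds the degrees of the generators of `J` by `r`, and it passes to their
syzygies with `r + 1` in place of `r`, because taking syzygies commutes, in degrees above `r`, with
reduction modulo the regular sequence `x₁, …, xₘ`. Iterating produces the resolution.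

To verify it for `J = I₁ ∩ ⋯ ∩ I_d + L`, note that `J + (x)` has the same shape with `L + (x)` in
place of `L`, so a single injective linear form `x` is needed at a time. Put `W = I₁ + ⋯ + I_d + L`.
If `W` does not contain all linear forms, any linear `x ∉ W` is a nonzerodivisor modulo `J`: the
linear forms in `W` lie in a complement of `x`, so all the ideals involved are extended from a
subring over which `S` is a polynomial ring in `x`. Otherwise a generic `x` is a nonzerodivisor
modulo the saturation `J'` of `J`. By induction on `d`, an element of `J'` of degree `≥ d - 1` lies
in `⋂ i ≠ a, I_i + L` for each `a`, hence is multiplied into `J` by each `I_a` and by `L`, that is,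
by all linear forms. An element `f` of degree `≥ d` with `x f ∈ J` lies in `J'` and in `J + (x)`, so
`f ≡ x h` modulo `J` with `h ∈ J'` of degree `≥ d - 1`, and therefore `f ∈ J`.
-/

open DirectSum SetLike HomogeneousIdeal Pointwise

section Criterion

variable {A F σ τ : Type*} [CommRing A] [AddCommGroup F] [Module A F] [SetLike σ A]
  [AddSubgroupClass σ A] [SetLike τ F] {𝒜 : ℕ → σ} [GradedRing 𝒜] {ℱ : ℕ → τ}

/-- The regularity criterion of Bayer and Stillman for a submodule `M` of the graded module `ℱ`,
relative to an ideal `Y`, in practice one with `Y • ⊤ ≤ M`: there are elements `x₁, …, xₘ` of degree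
one, forming a regular sequence on `A ⧸ Y` and generating the irrelevant ideal modulo `Y`, such that
`xⱼ` is injective on `F ⧸ (M + (x₁, …, xⱼ₋₁)F)` in degrees at least `r`, and
`F ⧸ (M + (x₁, …, xₘ)F)` vanishes there. -/
inductive BayerStillman (𝒜 : ℕ → σ) [GradedRing 𝒜] (ℱ : ℕ → τ) (r : ℕ) :
    Ideal A → Submodule A F → Prop
  | base (Y : Ideal A) (M : Submodule A F) : (irrelevant 𝒜).toIdeal ≤ Y →
      (∀ t ≥ r, ∀ f ∈ ℱ t, f ∈ M) → BayerStillman 𝒜 ℱ r Y M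
  | step (Y : Ideal A) (M : Submodule A F) (x : A) : x ∈ 𝒜 1 → IsSMulRegular (A ⧸ Y) x →
      (∀ t ≥ r, ∀ f ∈ ℱ t, x • f ∈ M → f ∈ M) →
      BayerStillman 𝒜 ℱ r (Y ⊔ Ideal.span {x}) (M ⊔ x • ⊤) → BayerStillman 𝒜 ℱ r Y M

theorem BayerStillman.mem_of_pow_smul_mem [GradedSMul 𝒜 ℱ]
    {r : ℕ} {Y : Ideal A} {M : Submodule A F} (h : BayerStillman 𝒜 ℱ r Y M) {t : ℕ} (ht : r ≤ t)
    {f : F} (hf : f ∈ ℱ t) (hpow : ∀ x ∈ 𝒜 1, ∃ N : ℕ, x ^ N • f ∈ M) : f ∈ M := by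
  cases h with
  | base _ _ _ htop => exact htop t ht f hf
  | step _ _ x hx _ hreg _ =>
    obtain ⟨N, hN⟩ := hpow x hx
    clear hpow
    induction N generalizing t f with
    | zero => simpa using hN
    | succ N ih =>
      have hxf : x • f ∈ ℱ (1 + t) := GradedSMul.smul_mem hx hf
      rw [pow_succ, mul_smul] at hN
      exact hreg t ht f hf (ih (by omega) hxf hN)

end Criterion

section GradedModule

variable {A F F' σ τ τ' : Type*} [CommRing A] [SetLike σ A] {𝒜 : ℕ → σ}
  [AddCommGroup F] [Module A F] [AddCommGroup F'] [Module A F']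
  [SetLike τ F] [AddSubgroupClass τ F] [SetLike τ' F'] [AddSubgroupClass τ' F']
  {ℱ : ℕ → τ} [Decomposition ℱ] {ℱ' : ℕ → τ'} [Decomposition ℱ'] {M N : Submodule A F}

theorem isHomogeneous_bot : (⊥ : Submodule A F).IsHomogeneous ℱ := by
  intro t f hf
  rw [(Submodule.mem_bot A).1 hf, decompose_zero]
  exact Submodule.zero_mem _

theorem isHomogeneous_sup (hM : M.IsHomogeneous ℱ) (hN : N.IsHomogeneous ℱ) :
    (M ⊔ N).IsHomogeneous ℱ := by
  intro t f hf
  obtain ⟨g, hg, h, hh, rfl⟩ := Submodule.mem_sup.1 hf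
  rw [decompose_add]
  exact Submodule.add_mem_sup (hM t hg) (hN t hh)

theorem coe_decompose_map {φ : F' →ₗ[A] F} (hφ : ∀ t, ∀ g ∈ ℱ' t, φ g ∈ ℱ t) (g : F') (t : ℕ) :
    (decompose ℱ (φ g) t : F) = φ (decompose ℱ' g t) := by
  induction g using Decomposition.inductionOn ℱ' with
  | zero => simp
  | add f g hf hg => simp [hf, hg]
  | @homogeneous s g =>
    by_cases hst : s = t
    · subst hst
      rw [decompose_of_mem_same _ (hφ s g g.2), decompose_of_mem_same _ g.2]
    · rw [decompose_of_mem_ne _ (hφ s g g.2) hst, decompose_of_mem_ne _ g.2 hst, map_zero]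

theorem isHomogeneous_comap {φ : F' →ₗ[A] F} (hφ : ∀ t, ∀ g ∈ ℱ' t, φ g ∈ ℱ t)
    (hM : M.IsHomogeneous ℱ) : (M.comap φ).IsHomogeneous ℱ' := by
  intro t g hg
  change φ (decompose ℱ' g t) ∈ M
  rw [← coe_decompose_map hφ]
  exact hM t hg

variable [GradedSMul 𝒜 ℱ] {i t : ℕ} {x : A} {f : F}

theorem coe_decompose_smul (hx : x ∈ 𝒜 i) (f : F) (t : ℕ) :
    (decompose ℱ (x • f) t : F) = if i ≤ t then x • (decompose ℱ f (t - i) : F) else 0 := by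
  induction f using Decomposition.inductionOn ℱ with
  | zero => simp
  | add f g hf hg => split_ifs at * <;> simp [hf, hg]
  | @homogeneous s f =>
    have hxf : x • (f : F) ∈ ℱ (i + s) := GradedSMul.smul_mem hx f.2
    by_cases hst : i + s = t
    · subst hst
      rw [decompose_of_mem_same _ hxf, if_pos le_self_add, Nat.add_sub_cancel_left,
        decompose_of_mem_same _ f.2]
    · rw [decompose_of_mem_ne _ hxf hst]
      split_ifs with hit
      · rw [decompose_of_mem_ne _ f.2 (by omega), smul_zero]
      · rfl

theorem exists_sub_smul_mem (hM : M.IsHomogeneous ℱ) (hx : x ∈ 𝒜 i) (hf : f ∈ ℱ t)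
    (hfM : f ∈ M ⊔ x • ⊤) :
    ∃ h, f - x • h ∈ M ∧ f - x • h ∈ ℱ t ∧ (h = 0 ∨ ∃ s, i + s = t ∧ h ∈ ℱ s) := by
  obtain ⟨g, hg, z, hz, hgz⟩ := Submodule.mem_sup.1 hfM
  obtain ⟨h, -, rfl⟩ := (Submodule.mem_smul_pointwise_iff_exists z x ⊤).1 hz
  have hft : f - (decompose ℱ (x • h) t : F) = decompose ℱ g t := by
    rw [sub_eq_iff_eq_add, ← AddMemClass.coe_add, ← DirectSum.add_apply, ← decompose_add, hgz,
      decompose_of_mem_same _ hf]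
  have hgM : f - (decompose ℱ (x • h) t : F) ∈ M := hft ▸ hM t hg
  have hgt : f - (decompose ℱ (x • h) t : F) ∈ ℱ t := hft ▸ SetLike.coe_mem _
  rw [coe_decompose_smul hx] at hgM hgt
  split_ifs at hgM hgt with hit
  · exact ⟨_, hgM, hgt, .inr ⟨t - i, Nat.add_sub_cancel' hit, SetLike.coe_mem _⟩⟩
  · exact ⟨0, by simpa using hgM, by simpa using hgt, .inl rfl⟩

theorem mem_comap_sup_smul_top {φ : F' →ₗ[A] F} (hM : LinearMap.range φ ⊔ N = M)
    (hN : N.IsHomogeneous ℱ) (hx : x ∈ 𝒜 1) {r : ℕ}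
    (hreg : ∀ t ≥ r, ∀ f ∈ ℱ t, x • f ∈ M → f ∈ M) (ht : r + 1 ≤ t) {g : F'} (hg : φ g ∈ ℱ t)
    (hφg : φ g ∈ N ⊔ x • ⊤) : g ∈ N.comap φ ⊔ x • ⊤ := by
  obtain ⟨h, hgh, -, hdeg⟩ := exists_sub_smul_mem hN hx hg hφg
  have hxh : x • h ∈ M := (Submodule.sub_mem_iff_right M
    (hM ▸ Submodule.mem_sup_left ⟨g, rfl⟩)).1 (hM ▸ Submodule.mem_sup_right hgh)
  have hh : h ∈ M := by
    obtain rfl | ⟨s, hs, hhs⟩ := hdeg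
    · exact M.zero_mem
    · exact hreg s (by omega) h hhs hxh
  obtain ⟨_, ⟨u, rfl⟩, y, hy, rfl⟩ := Submodule.mem_sup.1 (hM ▸ hh)
  have hgu : φ (g - x • u) = φ g - x • (φ u + y) + x • y := by
    rw [map_sub, map_smul, smul_add]; abel
  rw [← sub_add_cancel g (x • u)]
  refine Submodule.add_mem_sup ?_ (Submodule.smul_mem_pointwise_smul _ _ _ Submodule.mem_top)
  rw [Submodule.mem_comap, hgu]
  exact Submodule.add_mem _ hgh (Submodule.smul_mem _ _ hy)

theorem isHomogeneous_smul_top (hx : x ∈ 𝒜 i) :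
    (x • (⊤ : Submodule A F)).IsHomogeneous ℱ := by
  intro t f hf
  obtain ⟨h, -, rfl⟩ := (Submodule.mem_smul_pointwise_iff_exists f x ⊤).1 hf
  rw [coe_decompose_smul hx]
  split_ifs
  · exact Submodule.smul_mem_pointwise_smul _ _ _ Submodule.mem_top
  · exact Submodule.zero_mem _

variable [AddSubgroupClass σ A]

theorem isHomogeneous_span (𝒜 : ℕ → σ) [GradedRing 𝒜] [GradedSMul 𝒜 ℱ] {s : Set F}
    (hs : ∀ f ∈ s, ∃ t, f ∈ ℱ t) :
    (Submodule.span A s).IsHomogeneous ℱ := by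
  intro t f hf
  induction hf using Submodule.span_induction generalizing t with
  | mem f hf =>
    obtain ⟨u, hu⟩ := hs f hf
    by_cases hut : u = t
    · rw [← hut, decompose_of_mem_same _ hu]
      exact Submodule.subset_span hf
    · rw [decompose_of_mem_ne _ hu hut]
      exact Submodule.zero_mem _
  | zero => simp
  | add f g _ _ hf hg => simpa using Submodule.add_mem _ (hf t) (hg t)
  | smul a f _ hf =>
    induction a using Decomposition.inductionOn 𝒜 with
    | zero => simp
    | add a b ha hb => simpa [add_smul] using Submodule.add_mem _ ha hb
    | homogeneous a =>
      rw [coe_decompose_smul a.2]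
      split_ifs
      · exact Submodule.smul_mem _ _ (hf _)
      · exact Submodule.zero_mem _

theorem sup_span_singleton_smul_top (Y : Ideal A) (x : A) :
    (Y ⊔ Ideal.span {x}) • (⊤ : Submodule A F) = Y • ⊤ ⊔ x • ⊤ := by
  rw [Submodule.sup_smul, Submodule.ideal_span_singleton_smul]

theorem isSMulRegular_quotient_smul_top [Module.Flat A F] {Y : Ideal A} {x : A}
    (hx : IsSMulRegular (A ⧸ Y) x) : IsSMulRegular (F ⧸ (Y • ⊤ : Submodule A F)) x :=
  ((TensorProduct.quotTensorEquivQuotSMul F Y).isSMulRegular_congr x).1 (hx.rTensor F)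

namespace BayerStillman

variable [GradedRing 𝒜] {r : ℕ} {Y : Ideal A}

theorem of_le (h : BayerStillman 𝒜 ℱ r Y M) (hM : M.IsHomogeneous ℱ) (hNM : N ≤ M)
    (hN : ∀ t ≥ r, ∀ f ∈ ℱ t, f ∈ M → f ∈ N) : BayerStillman 𝒜 ℱ r Y N := by
  induction h generalizing N with
  | base Y M hY htop => exact .base _ _ hY fun t ht f hf => hN t ht f hf (htop t ht f hf)
  | step Y M x hx hYx hreg _ ih =>
    refine .step _ _ x hx hYx (fun t ht f hf hxf => hN t ht f hf (hreg t ht f hf (hNM hxf))) ?_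
    refine ih (isHomogeneous_sup hM (isHomogeneous_smul_top hx)) (sup_le_sup_right hNM _) ?_
    intro t ht f hf hfM
    obtain ⟨h, hg, hgt, -⟩ := exists_sub_smul_mem hM hx hf hfM
    rw [← sub_add_cancel f (x • h)]
    exact Submodule.add_mem_sup (hN t ht _ hgt hg)
      (Submodule.smul_mem_pointwise_smul _ _ _ Submodule.mem_top)

theorem le_of_forall_degree_le (h : BayerStillman 𝒜 ℱ r Y M) (hM : M.IsHomogeneous ℱ)
    (hN : N.IsHomogeneous ℱ)
    (hF : ∀ t > r, ∀ f ∈ ℱ t, f ∈ (irrelevant 𝒜).toIdeal • (⊤ : Submodule A F))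
    (hNM : N ≤ M) (hYN : Y • ⊤ ≤ N) (hle : ∀ t ≤ r, ∀ f ∈ ℱ t, f ∈ M → f ∈ N) : M ≤ N := by
  induction h generalizing N with
  | base Y M hY _ =>
    intro f hf
    refine (hN.mem_iff ℱ).2 fun t => ?_
    rcases le_or_gt t r with htr | htr
    · exact hle t htr _ (SetLike.coe_mem _) (hM t hf)
    · exact hYN (Submodule.smul_mono_left hY (hF t htr _ (SetLike.coe_mem _)))
  | step Y M x hx _ hreg _ ih =>
    have hx_top := isHomogeneous_smul_top (ℱ := ℱ) hx
    have hsup : M ⊔ x • ⊤ ≤ N ⊔ x • ⊤ := by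
      refine ih (isHomogeneous_sup hM hx_top) (isHomogeneous_sup hN hx_top)
        (sup_le_sup_right hNM _) ?_ ?_
      · rw [sup_span_singleton_smul_top]
        exact sup_le_sup_right hYN _
      · intro t ht f hf hfM
        obtain ⟨h, hg, hgt, -⟩ := exists_sub_smul_mem hM hx hf hfM
        rw [← sub_add_cancel f (x • h)]
        exact Submodule.add_mem_sup (hle t ht _ hgt hg)
          (Submodule.smul_mem_pointwise_smul _ _ _ Submodule.mem_top)
    have hdeg : ∀ t, ∀ f ∈ ℱ t, f ∈ M → f ∈ N := by
      intro t
      induction t with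
      | zero => exact hle 0 (Nat.zero_le r)
      | succ t iht =>
        intro f hf hfM
        rcases le_or_gt (t + 1) r with htr | htr
        · exact hle _ htr f hf hfM
        obtain ⟨h, hg, -, rfl | ⟨s, hs, hh⟩⟩ :=
          exists_sub_smul_mem hN hx hf (hsup (Submodule.mem_sup_left hfM))
        · simpa using hg
        obtain rfl : s = t := by omega
        have hxh : x • h ∈ M := (Submodule.sub_mem_iff_right M hfM).1 (hNM hg)
        exact (Submodule.sub_mem_iff_left N
          (N.smul_mem x (iht h hh (hreg s (by omega) h hh hxh)))).1 hg
    exact fun f hf => (hN.mem_iff ℱ).2 fun t => hdeg t _ (SetLike.coe_mem _) (hM t hf)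

theorem comap_syzygy [GradedSMul 𝒜 ℱ'] [Module.Flat A F] (h : BayerStillman 𝒜 ℱ r Y M)
    {φ : F' →ₗ[A] F} (hφ : ∀ t, ∀ g ∈ ℱ' t, φ g ∈ ℱ t) (hM : LinearMap.range φ ⊔ Y • ⊤ = M)
    (hY : (Y • ⊤ : Submodule A F).IsHomogeneous ℱ)
    (hF' : ∀ t > r, ∀ g ∈ ℱ' t, g ∈ (irrelevant 𝒜).toIdeal • (⊤ : Submodule A F')) :
    BayerStillman 𝒜 ℱ' (r + 1) Y ((Y • ⊤ : Submodule A F).comap φ) := by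
  induction h with
  | base Y M hYtop _ =>
    refine .base _ _ hYtop fun t ht g hg => ?_
    have hmap : φ g ∈ ((irrelevant 𝒜).toIdeal • (⊤ : Submodule A F')).map φ :=
      Submodule.mem_map_of_mem (hF' t ht g hg)
    rw [Submodule.map_smul''] at hmap
    exact Submodule.smul_mono hYtop le_top hmap
  | step Y M x hx hYx hreg _ ih =>
    have hYsup : ((Y ⊔ Ideal.span {x}) • ⊤ : Submodule A F).IsHomogeneous ℱ := by
      rw [sup_span_singleton_smul_top]
      exact isHomogeneous_sup hY (isHomogeneous_smul_top hx)
    have hFx := isSMulRegular_quotient_smul_top (F := F) hYx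
    refine .step _ _ x hx hYx (fun t _ g _ hxg => ?_) ?_
    · rw [Submodule.mem_comap, map_smul] at hxg
      exact mem_of_isSMulRegular_quotient_of_smul_mem hFx hxg
    refine (ih (by rw [sup_span_singleton_smul_top, ← sup_assoc, hM]) hYsup).of_le
      (isHomogeneous_comap hφ hYsup) ?_ fun t ht g hg hgsup => ?_
    · rw [sup_span_singleton_smul_top]
      refine sup_le (Submodule.comap_mono le_sup_left) ?_
      rw [← Submodule.map_le_iff_le_comap, Submodule.map_pointwise_smul]
      exact le_sup_of_le_right (smul_mono_right x le_top)
    · rw [sup_span_singleton_smul_top] at hgsup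
      exact mem_comap_sup_smul_top hM hY hx hreg ht (hφ t g hg) hgsup

end BayerStillman

end GradedModule

section ShiftedFree

variable {A σ ι : Type*} [CommRing A] [SetLike σ A] [AddSubgroupClass σ A]

/-- The degree `t` part of the graded free module `⨁ α, A(-e α)`. Its coordinate at `α` has degree
`t - e α`, and vanishes when that number is negative. -/
def shiftedFree (𝒜 : ℕ → σ) (e : ι → ℕ) (t : ℕ) : AddSubgroup (ι → A) where
  carrier := {f | ∀ α, f α = 0 ∨ (e α ≤ t ∧ f α ∈ 𝒜 (t - e α))}
  zero_mem' _ := .inl rfl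
  add_mem' {f g} hf hg α := by
    obtain hfα | ⟨hα, hfα⟩ := hf α
    · simpa [hfα] using hg α
    · refine .inr ⟨hα, add_mem hfα ?_⟩
      obtain hgα | ⟨-, hgα⟩ := hg α
      · exact hgα ▸ zero_mem _
      · exact hgα
  neg_mem' {f} hf α := (hf α).imp neg_eq_zero.2 fun h => ⟨h.1, neg_mem h.2⟩

variable {𝒜 : ℕ → σ} {e : ι → ℕ} {t : ℕ}

theorem single_mem_shiftedFree [DecidableEq ι] {α : ι} {a : A}
    (ha : a = 0 ∨ (e α ≤ t ∧ a ∈ 𝒜 (t - e α))) : Pi.single α a ∈ shiftedFree 𝒜 e t := by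
  intro β
  obtain rfl | hβ := eq_or_ne β α
  · simpa using ha
  · exact .inl (Pi.single_eq_of_ne (M := fun _ => A) hβ a)

section LinearCombination

variable {F τ : Type*} [AddCommGroup F] [Module A F] [SetLike τ F] [AddSubgroupClass τ F]
  {ℱ : ℕ → τ} [GradedSMul 𝒜 ℱ]

theorem linearCombination_mem_of_mem_shiftedFree [Fintype ι] {v : ι → F}
    (hv : ∀ α, v α ∈ ℱ (e α)) {f : ι → A} (hf : f ∈ shiftedFree 𝒜 e t) :
    Fintype.linearCombination A v f ∈ ℱ t := by
  rw [Fintype.linearCombination_apply]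
  refine sum_mem fun α _ => ?_
  obtain hα | ⟨hle, hα⟩ := hf α
  · rw [hα, zero_smul]
    exact zero_mem _
  · simpa [Nat.sub_add_cancel hle] using GradedSMul.smul_mem hα (hv α)

end LinearCombination

variable [GradedRing 𝒜]

instance : GradedSMul 𝒜 (shiftedFree 𝒜 e) where
  smul_mem {i t a f} ha hf α := by
    obtain hfα | ⟨hα, hfα⟩ := hf α
    · exact .inl (by simp [hfα])
    · refine .inr ⟨hα.trans le_add_self, ?_⟩
      rw [vadd_eq_add, Nat.add_sub_assoc hα]
      exact GradedMul.mul_mem ha hfα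

section Decomposition

variable [DecidableEq ι]

variable (𝒜 e) in
/-- The inclusion of the summand `A(-e α)` of `⨁ α, A(-e α)`, in terms of homogeneous components;
the decomposition of `shiftedFree` is assembled from these. -/
def shiftedFreeSingle (α : ι) : (⨁ s, 𝒜 s) →+ ⨁ t, shiftedFree 𝒜 e t :=
  toAddMonoid fun s => (of (fun t => shiftedFree 𝒜 e t) (s + e α)).comp
    { toFun a := ⟨Pi.single α (a : A), single_mem_shiftedFree (.inr ⟨le_add_self, by simp⟩)⟩
      map_zero' := by ext; simp
      map_add' a b := by ext; simp [Pi.single_add] }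

theorem coeAddMonoidHom_shiftedFreeSingle (α : ι) (a : A) :
    DirectSum.coeAddMonoidHom (shiftedFree 𝒜 e) (shiftedFreeSingle 𝒜 e α (decompose 𝒜 a)) =
      Pi.single α a := by
  induction a using Decomposition.inductionOn 𝒜 with
  | zero => simp
  | add a b ha hb => rw [decompose_add, map_add, map_add, ha, hb, Pi.single_add]
  | homogeneous a => simp [shiftedFreeSingle]

theorem shiftedFreeSingle_decompose {α : ι} {a : A}
    (ha : a = 0 ∨ (e α ≤ t ∧ a ∈ 𝒜 (t - e α))) :
    shiftedFreeSingle 𝒜 e α (decompose 𝒜 a) =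
      of (fun t => shiftedFree 𝒜 e t) t ⟨Pi.single α a, single_mem_shiftedFree ha⟩ := by
  obtain rfl | ⟨hα, haα⟩ := id ha
  · have h0 : (⟨Pi.single α 0, single_mem_shiftedFree ha⟩ : shiftedFree 𝒜 e t) = 0 :=
      Subtype.ext (Pi.single_zero α)
    rw [h0, decompose_zero, map_zero, map_zero]
  · obtain ⟨s, rfl⟩ := Nat.exists_eq_add_of_le' hα
    rw [Nat.add_sub_cancel] at haα
    rw [decompose_of_mem 𝒜 haα]
    simp [shiftedFreeSingle]

instance [Fintype ι] : Decomposition (shiftedFree 𝒜 e) :=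
  Decomposition.ofAddHom (shiftedFree 𝒜 e)
    (∑ α, ((shiftedFreeSingle 𝒜 e α).comp (decomposeAddEquiv 𝒜).toAddMonoidHom).comp
      (Pi.evalAddMonoidHom _ α))
    (by
      refine AddMonoidHom.ext fun f => ?_
      simp [coeAddMonoidHom_shiftedFreeSingle, Finset.univ_sum_single])
    (by
      ext t f : 2
      simp only [AddMonoidHom.comp_apply, coeAddMonoidHom_of, AddMonoidHom.finsetSum_apply]
      refine (Finset.sum_congr rfl fun α _ => shiftedFreeSingle_decompose (f.2 α)).trans ?_
      rw [← map_sum]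
      refine congrArg (of _ t) (Subtype.ext ?_)
      simp [Finset.univ_sum_single])

end Decomposition

theorem mem_irrelevant_smul_top_of_mem_shiftedFree [Finite ι] {r : ℕ} (he : ∀ α, e α ≤ r)
    (ht : r < t) {f : ι → A} (hf : f ∈ shiftedFree 𝒜 e t) :
    f ∈ (irrelevant 𝒜).toIdeal • (⊤ : Submodule A (ι → A)) := by
  classical
  have := Fintype.ofFinite ι
  rw [pi_eq_sum_univ' f]
  refine Submodule.sum_mem _ fun α _ => Submodule.smul_mem_smul ?_ Submodule.mem_top
  obtain hα | ⟨-, hα⟩ := hf α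
  · exact hα ▸ Ideal.zero_mem _
  · exact mem_irrelevant_of_mem 𝒜 (Nat.sub_pos_of_lt ((he α).trans_lt ht)) hα

end ShiftedFree

section Resolution

variable {A σ F τ : Type*} [CommRing A] [SetLike σ A] [AddSubgroupClass σ A]
  [AddCommGroup F] [Module A F] [SetLike τ F] [AddSubgroupClass τ F] {𝒜 : ℕ → σ} [GradedRing 𝒜]
  {ℱ : ℕ → τ} [Decomposition ℱ] [GradedSMul 𝒜 ℱ] {r : ℕ} {M : Submodule A F}

theorem BayerStillman.exists_span_range_eq [IsNoetherian A F] (h : BayerStillman 𝒜 ℱ r ⊥ M)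
    (hM : M.IsHomogeneous ℱ)
    (hF : ∀ t > r, ∀ f ∈ ℱ t, f ∈ (irrelevant 𝒜).toIdeal • (⊤ : Submodule A F)) :
    ∃ (m : ℕ) (e : Fin m → ℕ) (v : Fin m → F), (∀ α, e α ≤ r) ∧ (∀ α, v α ∈ ℱ (e α)) ∧
      Submodule.span A (Set.range v) = M := by
  let s : Set F := {f | f ∈ M ∧ ∃ t ≤ r, f ∈ ℱ t}
  have hs : Submodule.span A s = M := by
    have hsM : Submodule.span A s ≤ M := Submodule.span_le.2 fun f hf => hf.1
    refine le_antisymm hsM (h.le_of_forall_degree_le hM ?_ hF hsM (by simp) ?_)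
    · exact isHomogeneous_span 𝒜 fun f ⟨_, t, _, hf⟩ => ⟨t, hf⟩
    · exact fun t ht f hf hfM => Submodule.subset_span ⟨hfM, t, ht, hf⟩
  obtain ⟨b, hbs, hb⟩ := (Submodule.fg_span_iff_fg_span_finset_subset s).1
    (IsNoetherian.noetherian (Submodule.span A s))
  choose _ e he hbe using fun α => hbs (b.equivFin.symm α).2
  refine ⟨b.card, e, fun α => b.equivFin.symm α, he, hbe, ?_⟩
  rw [← hs, hb, Set.range_comp' Subtype.val, b.equivFin.symm.range_eq_univ, Set.image_univ,
    Subtype.range_val]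

variable (𝒜) in
/-- A syzygy module inside a graded free module `⨁ α, A(-degree α)`, as it appears in a linear
resolution: the generators of the free module have degree less than `r`, and the syzygies satisfy
the Bayer–Stillman criterion in degree `r`. -/
structure SyzygyStage (r : ℕ) where
  rank : ℕ
  degree : Fin rank → ℕ
  syzygies : Submodule A (Fin rank → A)
  degree_lt : ∀ α, degree α < r
  isHomogeneous : syzygies.IsHomogeneous (shiftedFree 𝒜 degree)
  bayerStillman : BayerStillman 𝒜 (shiftedFree 𝒜 degree) r ⊥ syzygies

theorem BayerStillman.exists_syzygyStage [IsNoetherian A F] [Module.Flat A F]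
    (h : BayerStillman 𝒜 ℱ r ⊥ M) (hM : M.IsHomogeneous ℱ)
    (hF : ∀ t > r, ∀ f ∈ ℱ t, f ∈ (irrelevant 𝒜).toIdeal • (⊤ : Submodule A F)) :
    ∃ (s : SyzygyStage 𝒜 (r + 1)) (δ : (Fin s.rank → A) →ₗ[A] F), LinearMap.range δ = M ∧
      LinearMap.ker δ = s.syzygies ∧ ∀ β, δ (Pi.single β 1) ∈ ℱ (s.degree β) := by
  obtain ⟨m, e, v, he, hv, hspan⟩ := h.exists_span_range_eq hM hF
  have hφ : ∀ t, ∀ g ∈ shiftedFree 𝒜 e t, Fintype.linearCombination A v g ∈ ℱ t :=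
    fun t g => linearCombination_mem_of_mem_shiftedFree hv
  have hbot : (⊥ : Ideal A) • (⊤ : Submodule A F) = ⊥ := Submodule.bot_smul ⊤
  have hker := h.comap_syzygy hφ (by rw [hbot, sup_bot_eq, Fintype.range_linearCombination, hspan])
    (hbot ▸ isHomogeneous_bot)
    fun t ht g hg => mem_irrelevant_smul_top_of_mem_shiftedFree he ht hg
  rw [hbot, Submodule.comap_bot] at hker
  refine ⟨⟨m, e, _, fun α => Nat.lt_succ_of_le (he α), ?_, hker⟩, _, ?_, rfl, fun β => ?_⟩
  · exact isHomogeneous_comap hφ isHomogeneous_bot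
  · rw [Fintype.range_linearCombination, hspan]
  · simpa using hv β

theorem SyzygyStage.exists_next [IsNoetherianRing A] (s : SyzygyStage 𝒜 r) :
    ∃ (s' : SyzygyStage 𝒜 (r + 1)) (δ : (Fin s'.rank → A) →ₗ[A] (Fin s.rank → A)),
      LinearMap.range δ = s.syzygies ∧ LinearMap.ker δ = s'.syzygies ∧
        ∀ β, δ (Pi.single β 1) ∈ shiftedFree 𝒜 s.degree (s'.degree β) :=
  s.bayerStillman.exists_syzygyStage s.isHomogeneous fun _ ht _ hf =>
    mem_irrelevant_smul_top_of_mem_shiftedFree (fun α => (s.degree_lt α).le) ht hf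

end Resolution

theorem idealIsRegular_of_bayerStillman {k : Type*} [Field k] {n r : ℕ} {I : Ideal (MvP k n)}
    (hI : I.IsHomogeneous (homogeneousSubmodule (Fin (n + 1)) k))
    (h : BayerStillman (homogeneousSubmodule (Fin (n + 1)) k)
      (homogeneousSubmodule (Fin (n + 1)) k) r ⊥ I) :
    IdealIsRegular I r := by
  obtain ⟨s₀, ε, hε, hkerε, hdegε⟩ := h.exists_syzygyStage hI fun t ht f hf => by
    rw [smul_eq_mul, Ideal.mul_top]
    exact mem_irrelevant_of_mem _ (r.zero_le.trans_lt ht) hf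
  choose next δ hrange hker hdeg using
    fun r => SyzygyStage.exists_next (𝒜 := homogeneousSubmodule (Fin (n + 1)) k) (r := r)
  let stage (i : ℕ) : SyzygyStage (homogeneousSubmodule (Fin (n + 1)) k) (r + 1 + i) :=
    Nat.rec s₀ (fun i s => next (r + 1 + i) s) i
  refine ⟨fun i => (stage i).rank, fun i => (stage i).degree, fun i => δ _ (stage i), ε, hε,
    hkerε.trans (hrange _ s₀).symm,
    fun i => (hker _ (stage i)).trans (hrange _ (stage (i + 1))).symm,
    hdegε, fun i => hdeg _ (stage i), fun i β => ?_⟩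
  have hlt := (stage i).degree_lt β
  change ((stage i).degree β : ℤ) ≤ r + i
  omega

section ExpandAlong

theorem iInf_le_comap_map_C {A : Type*} [CommSemiring A] {ι : Sort*} {φ : A →+* Polynomial A}
    {J : ι → Ideal A} (hJ : ∀ i, J i ≤ ((J i).map Polynomial.C).comap φ) :
    ⨅ i, J i ≤ ((⨅ i, J i).map Polynomial.C).comap φ := by
  intro f hf
  simp only [Ideal.mem_comap, Ideal.mem_map_C_iff, Ideal.mem_iInf] at hf ⊢
  exact fun j i => Ideal.mem_map_C_iff.1 (hJ i (hf i)) j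

theorem sup_le_comap_map_C {A : Type*} [CommSemiring A] {φ : A →+* Polynomial A} {J K : Ideal A}
    (hJ : J ≤ (J.map Polynomial.C).comap φ) (hK : K ≤ (K.map Polynomial.C).comap φ) :
    J ⊔ K ≤ ((J ⊔ K).map Polynomial.C).comap φ := by
  rw [Ideal.map_sup]
  exact sup_le (hJ.trans (Ideal.comap_mono le_sup_left)) (hK.trans (Ideal.comap_mono le_sup_right))

variable {σ R : Type*} [CommRing R]

/-- The substitution writing a linear form `v` as `(v - l v • x) + l v • x` and replacing the second
occurrence of `x` by a new variable. If `l x = 1` this exhibits `MvPolynomial σ R` as polynomials in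
`x` over the linear forms in the kernel of `l`. -/
noncomputable def expandAlong (l : MvPolynomial σ R →ₗ[R] R) (x : MvPolynomial σ R) :
    MvPolynomial σ R →ₐ[R] Polynomial (MvPolynomial σ R) :=
  aeval fun i => Polynomial.C (X i) +
    Polynomial.C (C (l (X i))) * (Polynomial.X - Polynomial.C x)

variable {l : MvPolynomial σ R →ₗ[R] R} {x : MvPolynomial σ R}

theorem expandAlong_of_mem_degree_one {v : MvPolynomial σ R} (hv : v ∈ homogeneousSubmodule σ R 1) :
    expandAlong l x v = Polynomial.C v +
      Polynomial.C (C (l v)) * (Polynomial.X - Polynomial.C x) := by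
  rw [homogeneousSubmodule_one_eq_span_X] at hv
  induction hv using Submodule.span_induction with
  | mem v hv =>
    obtain ⟨i, rfl⟩ := hv
    exact aeval_X _ i
  | zero => simp
  | add v w _ _ hv hw =>
    simp only [map_add, hv, hw]
    ring
  | smul a v _ hv =>
    rw [map_smul, hv, map_smul l]
    simp only [smul_eq_mul, map_mul, Algebra.smul_def, Polynomial.algebraMap_apply,
      MvPolynomial.algebraMap_eq]
    ring

theorem eval_expandAlong (f : MvPolynomial σ R) : (expandAlong l x f).eval x = f := by
  induction f using MvPolynomial.induction_on with
  | C a => simp [expandAlong, MvPolynomial.algebraMap_eq]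
  | add f g hf hg => rw [map_add, Polynomial.eval_add, hf, hg]
  | mul_X f i hf => rw [map_mul, Polynomial.eval_mul, hf]; simp [expandAlong]

theorem span_le_comap_expandAlong {T : Set (MvPolynomial σ R)}
    (hT : T ⊆ homogeneousSubmodule σ R 1) (hlT : ∀ v ∈ T, l v = 0) :
    Ideal.span T ≤ ((Ideal.span T).map Polynomial.C).comap (expandAlong l x : _ →+* _) := by
  rw [Ideal.span_le]
  intro v hv
  have hxv : expandAlong l x v = Polynomial.C v := by
    simp [expandAlong_of_mem_degree_one (hT hv), hlT v hv]
  simpa [hxv] using Ideal.mem_map_of_mem Polynomial.C (Ideal.subset_span hv)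

theorem isSMulRegular_quotient_of_le_comap_expandAlong (hx : x ∈ homogeneousSubmodule σ R 1)
    (hlx : l x = 1) {J : Ideal (MvPolynomial σ R)}
    (hJ : J ≤ (J.map Polynomial.C).comap (expandAlong l x : _ →+* _)) :
    IsSMulRegular (MvPolynomial σ R ⧸ J) x := by
  have hX : expandAlong l x x = Polynomial.X := by
    simp [expandAlong_of_mem_degree_one hx, hlx]
  refine (isSMulRegular_quotient_iff_mem_of_smul_mem J x).2 fun f hf => ?_
  have hXf : Polynomial.X * expandAlong l x f ∈ J.map Polynomial.C := by
    simpa [hX] using hJ hf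
  have hcoeff (j : ℕ) : (expandAlong l x f).coeff j ∈ J := by
    simpa using Ideal.mem_map_C_iff.1 hXf (j + 1)
  rw [← eval_expandAlong (l := l) (x := x) f, Polynomial.eval_eq_sum]
  exact Ideal.sum_mem _ fun j _ => Ideal.mul_mem_right _ _ (hcoeff j)

end ExpandAlong

theorem irrelevant_homogeneousSubmodule_le {σ R : Type*} [CommRing R]
    {P : Ideal (MvPolynomial σ R)}
    (hP : (homogeneousSubmodule σ R 1 : Set (MvPolynomial σ R)) ⊆ P) :
    (irrelevant (homogeneousSubmodule σ R)).toIdeal ≤ P := by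
  have hX : Ideal.span (X '' (Set.univ : Set σ)) ≤ P := by
    rw [Ideal.span_le]
    rintro _ ⟨i, -, rfl⟩
    exact hP (isHomogeneous_X R i)
  refine (toIdeal_irrelevant_le _).2 fun t ht f hf => hX (mem_ideal_span_X_image.2 fun m hm => ?_)
  have hdeg : m.degree ≠ 0 := by
    rw [Finsupp.degree_eq_weight_one]
    exact (hf (mem_support_iff.1 hm)).trans_ne ht.ne'
  simpa [Finsupp.degree_eq_zero_iff, Finsupp.ext_iff] using hdeg

section Generic

variable {k A : Type*} [Field k] [Infinite k] [CommRing A] [Algebra k A] {V : Submodule k A}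

theorem exists_mem_forall_notMem_of_finite {s : Set (Ideal A)} (hs : s.Finite)
    (hV : ∀ P ∈ s, ¬(V : Set A) ⊆ P) : ∃ x ∈ V, ∀ P ∈ s, x ∉ P := by
  classical
  let restrict (P : Ideal A) : Subspace k V := (P.restrictScalars k).comap V.subtype
  have htop : ⊤ ∉ hs.toFinset.image restrict := by
    simp only [Finset.mem_image, hs.mem_toFinset, not_exists, not_and]
    exact fun P hP hPtop => hV P hP fun x hx => (hPtop ▸ Submodule.mem_top : ⟨x, hx⟩ ∈ restrict P)
  obtain ⟨x, hx⟩ := (Set.ne_univ_iff_exists_notMem _).1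
    (Subspace.biUnion_ne_univ_of_top_notMem htop)
  refine ⟨x, x.2, fun P hP hxP => hx ?_⟩
  exact Set.mem_biUnion (Finset.mem_image_of_mem _ (hs.mem_toFinset.2 hP)) hxP

theorem exists_isSMulRegular_quotient [IsNoetherianRing A] {I Z : Ideal A}
    (hI : I.colon (V : Set A) ≤ I) (hZ : ¬(V : Set A) ⊆ Z) :
    ∃ x ∈ V, x ∉ Z ∧ IsSMulRegular (A ⧸ I) x := by
  obtain ⟨x, hxV, hx⟩ := exists_mem_forall_notMem_of_finite (V := V)
    ((associatedPrimes.finite A (A ⧸ I)).insert Z) <| by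
      rintro P (rfl | hP) hVP
      · exact hZ hVP
      obtain ⟨hprime, f, hf⟩ := isAssociatedPrime_iff.1 hP
      obtain ⟨f, rfl⟩ := Ideal.Quotient.mk_surjective f
      have hmem (a : A) : a ∈ P ↔ a * f ∈ I := by
        rw [hf, Submodule.mem_colon_singleton, Submodule.mem_bot, ← Ideal.Quotient.eq_zero_iff_mem]
        rfl
      have hfI : f ∈ I := hI <| Submodule.mem_colon.2 fun v hv => by
        rw [smul_eq_mul, mul_comm]
        exact (hmem v).1 (hVP hv)
      exact hprime.one_notMem ((hmem 1).2 (by rwa [one_mul]))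
  refine ⟨x, hxV, hx Z (Set.mem_insert _ _), of_not_not fun hreg => ?_⟩
  have hxP : x ∈ ⋃ P ∈ associatedPrimes A (A ⧸ I), (P : Set A) := by
    rwa [biUnion_associatedPrimes_eq_compl_regular]
  obtain ⟨P, hP, hxP⟩ := Set.mem_iUnion₂.1 hxP
  exact hx P (Set.mem_insert_of_mem _ hP) hxP

end Generic

theorem exists_saturation {A : Type*} [CommRing A] [IsNoetherianRing A] (m J : Ideal A) :
    ∃ I ≥ J, I.colon (m : Set A) ≤ I ∧ ∃ N : ℕ, m ^ N * I ≤ J := by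
  let c : ℕ →o Ideal A := ⟨fun N => J.colon ((m ^ N : Ideal A) : Set A),
    fun _ _ hMN => Submodule.colon_mono le_rfl (Ideal.pow_le_pow_right hMN)⟩
  obtain ⟨N, hN⟩ := monotone_stabilizes_iff_noetherian.2 (inferInstance : IsNoetherian A A) c
  refine ⟨c N, Ideal.le_colon, fun f hf => ?_, N, ?_⟩
  · rw [hN (N + 1) N.le_succ]
    refine Submodule.mem_colon.2 fun g hg => ?_
    rw [SetLike.mem_coe, pow_succ'] at hg
    induction hg using Submodule.mul_induction_on' with
    | mem_mul_mem a ha b hb =>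
      rw [smul_eq_mul, ← mul_assoc]
      exact Submodule.mem_colon.1 (Submodule.mem_colon.1 hf a ha) b hb
    | add a _ b _ ha hb => simpa [mul_add] using J.add_mem ha hb
  · refine Ideal.mul_le.2 fun g hg f hf => ?_
    rw [mul_comm]
    exact Submodule.mem_colon.1 hf g hg

theorem sup_mul_iInf_succAbove_le {A : Type*} [CommSemiring A] {d : ℕ} (I : Fin (d + 1) → Ideal A)
    (L : Ideal A) :
    ((⨆ a, I a) ⊔ L) * (⨅ a, (⨅ j, I (Fin.succAbove a j)) ⊔ L) ≤ (⨅ a, I a) ⊔ L := by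
  rw [Ideal.sup_mul, Ideal.iSup_mul]
  refine sup_le (iSup_le fun a => ?_) (Ideal.mul_le_left.trans le_sup_right)
  refine (Ideal.mul_mono_right (iInf_le _ a)).trans ?_
  rw [Ideal.mul_sup]
  refine sup_le_sup (le_iInf fun b => ?_) Ideal.mul_le_right
  obtain rfl | ⟨j, rfl⟩ := Fin.eq_self_or_eq_succAbove a b
  · exact Ideal.mul_le_left
  · exact Ideal.mul_le_right.trans (iInf_le _ j)

section GradedIdeal

variable {A σ : Type*} [CommRing A] [SetLike σ A] [AddSubgroupClass σ A] {𝒜 : ℕ → σ} [GradedRing 𝒜]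
  {r : ℕ} {Y : Ideal A}

theorem BayerStillman.mem_of_smul_mem {F τ : Type*} [AddCommGroup F] [Module A F] [SetLike τ F]
    [AddSubgroupClass τ F] {ℱ : ℕ → τ} [Decomposition ℱ] [GradedSMul 𝒜 ℱ] {M M' : Submodule A F}
    {x : A} (h : BayerStillman 𝒜 ℱ r Y (M ⊔ x • ⊤)) (hM : M.IsHomogeneous ℱ) (hx : x ∈ 𝒜 1)
    (hMM' : M ≤ M') (hpow : ∀ f ∈ M', ∀ y ∈ 𝒜 1, ∃ N : ℕ, y ^ N • f ∈ M)
    (hreg : IsSMulRegular (F ⧸ M') x)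
    (hsmul : ∀ s, r ≤ s + 1 → ∀ g ∈ ℱ s, g ∈ M' → x • g ∈ M) {t : ℕ} (ht : r ≤ t) {f : F}
    (hf : f ∈ ℱ t) (hxf : x • f ∈ M) : f ∈ M := by
  have hfM' : f ∈ M' := mem_of_isSMulRegular_quotient_of_smul_mem hreg (hMM' hxf)
  have hfsup : f ∈ M ⊔ x • ⊤ := h.mem_of_pow_smul_mem ht hf fun y hy =>
    (hpow f hfM' y hy).imp fun _ hN => Submodule.mem_sup_left hN
  obtain ⟨g, hg, -, rfl | ⟨s, hs, hgs⟩⟩ := exists_sub_smul_mem hM hx hf hfsup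
  · simpa using hg
  have hxgM' : x • g ∈ M' := (Submodule.sub_mem_iff_right M' hfM').1 (hMM' hg)
  have hgM' : g ∈ M' := mem_of_isSMulRegular_quotient_of_smul_mem hreg hxgM'
  exact (Submodule.sub_mem_iff_left M (hsmul s (by omega) g hgs hgM')).1 hg

variable {d : ℕ} {I : Fin (d + 1) → Ideal A} {L : Ideal A}

theorem mul_mem_iInf_sup_of_pow_mul_mem
    (h : ∀ a : Fin (d + 1), BayerStillman 𝒜 𝒜 r Y ((⨅ j, I (a.succAbove j)) ⊔ L))
    {t : ℕ} (ht : r ≤ t) {f : A} (hf : f ∈ 𝒜 t)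
    (hpow : ∀ y ∈ 𝒜 1, ∃ N : ℕ, y ^ N * f ∈ (⨅ a, I a) ⊔ L) {z : A} (hz : z ∈ (⨆ a, I a) ⊔ L) :
    z * f ∈ (⨅ a, I a) ⊔ L := by
  refine sup_mul_iInf_succAbove_le I L (Ideal.mul_mem_mul hz (Ideal.mem_iInf.2 fun a => ?_))
  refine (h a).mem_of_pow_smul_mem ht hf fun y hy => (hpow y hy).imp fun N hN => ?_
  exact sup_le_sup_right (le_iInf fun j => iInf_le I (a.succAbove j)) L hN

end GradedIdeal

theorem exists_degree_one_forall_mem_of_smul_mem {k A : Type*} [Field k] [Infinite k]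
    [CommRing A] [Algebra k A] [IsNoetherianRing A] {𝒜 : ℕ → Submodule k A} [GradedRing 𝒜] {d r : ℕ}
    {I : Fin (d + 1) → Ideal A} {Y Z L : Ideal A} (hIL : ((⨅ a, I a) ⊔ L).IsHomogeneous 𝒜)
    (h : ∀ a : Fin (d + 1), BayerStillman 𝒜 𝒜 r Z ((⨅ j, I (a.succAbove j)) ⊔ L))
    (hsup : (𝒜 1 : Set A) ⊆ ↑((⨆ a, I a) ⊔ L)) (hY : ¬(𝒜 1 : Set A) ⊆ Y) :
    ∃ x ∈ 𝒜 1, x ∉ Y ∧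
      (BayerStillman 𝒜 𝒜 (r + 1) (Y ⊔ Ideal.span {x}) ((⨅ a, I a) ⊔ L ⊔ x • ⊤) →
        ∀ t ≥ r + 1, ∀ f ∈ 𝒜 t, x • f ∈ (⨅ a, I a) ⊔ L → f ∈ (⨅ a, I a) ⊔ L) := by
  obtain ⟨I', hII', hcolon, N, hN⟩ :=
    exists_saturation (Ideal.span (𝒜 1 : Set A)) ((⨅ a, I a) ⊔ L)
  rw [Ideal.colon_span] at hcolon
  obtain ⟨x, hx, hxY, hreg⟩ := exists_isSMulRegular_quotient hcolon hY
  have hpow (f : A) (hf : f ∈ I') (y : A) (hy : y ∈ 𝒜 1) : ∃ N : ℕ, y ^ N * f ∈ (⨅ a, I a) ⊔ L :=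
    ⟨N, hN (Ideal.mul_mem_mul (Ideal.pow_mem_pow (Ideal.subset_span hy) N) hf)⟩
  refine ⟨x, hx, hxY, fun hBS t ht f hf => hBS.mem_of_smul_mem hIL hx hII' hpow hreg ?_ ht hf⟩
  exact fun s hs g hg hgI' =>
    mul_mem_iInf_sup_of_pow_mul_mem h (by omega) hg (hpow g hgI') (hsup hx)

section LinearIdeal

variable {k : Type*} [Field k] {n : ℕ}

namespace IsLinearIdeal

variable {I J : Ideal (MvP k n)}

theorem isHomogeneous (hI : IsLinearIdeal I) :
    I.IsHomogeneous (homogeneousSubmodule (Fin (n + 1)) k) := by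
  obtain ⟨T, hT, rfl⟩ := hI
  exact Ideal.homogeneous_span _ _ fun x hx => ⟨1, hT hx⟩

theorem sup (hI : IsLinearIdeal I) (hJ : IsLinearIdeal J) : IsLinearIdeal (I ⊔ J) := by
  obtain ⟨T, hT, rfl⟩ := hI
  obtain ⟨U, hU, rfl⟩ := hJ
  exact ⟨T ∪ U, Set.union_subset hT hU, (Ideal.span_union _ _).symm⟩

theorem span_singleton {x : MvP k n} (hx : x ∈ homogeneousSubmodule (Fin (n + 1)) k 1) :
    IsLinearIdeal (Ideal.span {x}) := ⟨{x}, Set.singleton_subset_iff.2 hx, rfl⟩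

theorem bot : IsLinearIdeal (⊥ : Ideal (MvP k n)) :=
  ⟨∅, Set.empty_subset _, Ideal.span_empty.symm⟩

end IsLinearIdeal

theorem isHomogeneous_iInf_sup {ι : Sort*} {I : ι → Ideal (MvP k n)} {L : Ideal (MvP k n)}
    (hI : ∀ i, IsLinearIdeal (I i)) (hL : IsLinearIdeal L) :
    ((⨅ i, I i) ⊔ L).IsHomogeneous (homogeneousSubmodule (Fin (n + 1)) k) :=
  (Ideal.IsHomogeneous.iInf fun i => (hI i).isHomogeneous).sup hL.isHomogeneous

theorem isSMulRegular_quotient_iInf_sup {ι : Sort*} {I : ι → Ideal (MvP k n)}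
    {L : Ideal (MvP k n)} (hI : ∀ i, IsLinearIdeal (I i)) (hL : IsLinearIdeal L) {x : MvP k n}
    (hx : x ∈ homogeneousSubmodule (Fin (n + 1)) k 1) (hxIL : x ∉ (⨆ i, I i) ⊔ L) :
    IsSMulRegular (MvP k n ⧸ ((⨅ i, I i) ⊔ L)) x := by
  obtain ⟨l₀, hl₀x, hker⟩ := Submodule.exists_le_ker_of_notMem
    (p := ((⨆ i, I i) ⊔ L).restrictScalars k) hxIL
  let l : MvP k n →ₗ[k] k := (l₀ x)⁻¹ • l₀
  have hlx : l x = 1 := inv_mul_cancel₀ hl₀x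
  have hl (v : MvP k n) (hv : v ∈ (⨆ i, I i) ⊔ L) : l v = 0 := by
    have hl₀v : l₀ v = 0 := hker hv
    simp [l, hl₀v]
  have hexpand (J : Ideal (MvP k n)) (hJ : IsLinearIdeal J) (hJle : J ≤ (⨆ i, I i) ⊔ L) :
      J ≤ (J.map Polynomial.C).comap (expandAlong l x : _ →+* _) := by
    obtain ⟨T, hT, rfl⟩ := hJ
    exact span_le_comap_expandAlong hT fun v hv => hl v (hJle (Ideal.subset_span hv))
  refine isSMulRegular_quotient_of_le_comap_expandAlong hx hlx (sup_le_comap_map_C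
    (iInf_le_comap_map_C fun i => hexpand _ (hI i) ?_) (hexpand _ hL le_sup_right))
  exact (le_iSup I i).trans le_sup_left

theorem IsLinearIdeal.isSMulRegular_quotient {Y : Ideal (MvP k n)} (hY : IsLinearIdeal Y)
    {x : MvP k n} (hx : x ∈ homogeneousSubmodule (Fin (n + 1)) k 1) (hxY : x ∉ Y) :
    IsSMulRegular (MvP k n ⧸ Y) x := by
  have hreg := isSMulRegular_quotient_iInf_sup (fun _ : Unit => hY) hY hx (by simpa using hxY)
  rwa [iInf_const, sup_idem] at hreg

theorem bayerStillman_sup_of_exists {r : ℕ} {J : Ideal (MvP k n)} (hJ : r = 0 → J = ⊤)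
    (hstep : ∀ Y L : Ideal (MvP k n), IsLinearIdeal L →
      ¬(homogeneousSubmodule (Fin (n + 1)) k 1 : Set (MvP k n)) ⊆ Y →
      ∃ x ∈ homogeneousSubmodule (Fin (n + 1)) k 1, x ∉ Y ∧
        (BayerStillman (homogeneousSubmodule _ k) (homogeneousSubmodule _ k) r
            (Y ⊔ Ideal.span {x}) (J ⊔ L ⊔ x • ⊤) →
          ∀ t ≥ r, ∀ f ∈ homogeneousSubmodule _ k t, x • f ∈ J ⊔ L → f ∈ J ⊔ L))
    {Y L : Ideal (MvP k n)} (hY : IsLinearIdeal Y) (hL : IsLinearIdeal L) (hYL : Y ≤ L) :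
    BayerStillman (homogeneousSubmodule (Fin (n + 1)) k) (homogeneousSubmodule (Fin (n + 1)) k) r
      Y (J ⊔ L) := by
  induction Y using WellFoundedGT.induction generalizing L with | ind Y ih
  by_cases hVY : (homogeneousSubmodule (Fin (n + 1)) k 1 : Set (MvP k n)) ⊆ Y
  · have hirr := irrelevant_homogeneousSubmodule_le hVY
    refine .base _ _ hirr fun t ht f hf => ?_
    obtain rfl | hr := r.eq_zero_or_pos
    · simp [hJ rfl]
    · exact Submodule.mem_sup_right
        (hYL (hirr (mem_irrelevant_of_mem _ (hr.trans_le ht) hf)))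
  obtain ⟨x, hx, hxY, hinj⟩ := hstep Y L hL hVY
  have hnext : BayerStillman (homogeneousSubmodule (Fin (n + 1)) k)
      (homogeneousSubmodule (Fin (n + 1)) k) r (Y ⊔ Ideal.span {x}) (J ⊔ L ⊔ x • ⊤) := by
    rw [← Submodule.ideal_span_singleton_smul, smul_eq_mul, Ideal.mul_top, sup_assoc]
    have hlin := IsLinearIdeal.span_singleton hx
    refine ih _ (left_lt_sup.2 fun hle => hxY ?_) (hY.sup hlin) (hL.sup hlin)
      (sup_le_sup_right hYL _)
    exact hle (Ideal.mem_span_singleton_self x)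
  exact .step _ _ x hx (hY.isSMulRegular_quotient hx hxY) (hinj hnext) hnext

theorem bayerStillman_iInf_sup [Infinite k] {d : ℕ} {I : Fin d → Ideal (MvP k n)}
    (hI : ∀ i, IsLinearIdeal (I i)) {Y L : Ideal (MvP k n)} (hY : IsLinearIdeal Y)
    (hL : IsLinearIdeal L) (hYL : Y ≤ L) :
    BayerStillman (homogeneousSubmodule (Fin (n + 1)) k) (homogeneousSubmodule (Fin (n + 1)) k) d
      Y ((⨅ i, I i) ⊔ L) := by
  induction d generalizing Y L with
  | zero =>
    refine bayerStillman_sup_of_exists (fun _ => iInf_of_empty I) (fun Y L _ hVY => ?_)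
      hY hL hYL
    obtain ⟨x, hx, hxY⟩ := Set.not_subset.1 hVY
    exact ⟨x, hx, hxY, by simp⟩
  | succ d ih =>
    refine bayerStillman_sup_of_exists (by simp) (fun Y L hL hVY => ?_) hY hL hYL
    by_cases hsup : (homogeneousSubmodule (Fin (n + 1)) k 1 : Set (MvP k n)) ⊆ ↑((⨆ i, I i) ⊔ L)
    · exact exists_degree_one_forall_mem_of_smul_mem (isHomogeneous_iInf_sup hI hL)
        (fun a => ih (fun j => hI _) .bot hL bot_le) hsup hVY
    obtain ⟨x, hx, hxs⟩ := exists_mem_forall_notMem_of_finite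
      (V := homogeneousSubmodule _ k 1)
      (Set.toFinite {Y, (⨆ i, I i) ⊔ L}) (by simp [hVY, hsup])
    refine ⟨x, hx, hxs _ (by simp), fun _ t _ f _ => ?_⟩
    exact mem_of_isSMulRegular_quotient_of_smul_mem
      (isSMulRegular_quotient_iInf_sup hI hL hx (hxs _ (by simp)))

end LinearIdeal

/-- For linear ideals `I_1, …, I_d` and any linear ideal `L` over an infinite field,
`I_1 ∩ ⋯ ∩ I_d + L` is `d`-regular. -/
theorem regularity_of_intersection_plus_linear {k : Type*} [Field k] [Infinite k]
    {n d : ℕ} (hd : 0 < d) (I : Fin d → Ideal (MvP k n)) (L : Ideal (MvP k n))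
    (hlin : ∀ i, IsLinearIdeal (I i)) (hL : IsLinearIdeal L) :
    IdealIsRegular ((⨅ i, I i) + L) (d : ℤ) :=
  idealIsRegular_of_bayerStillman (isHomogeneous_iInf_sup hlin hL)
    (bayerStillman_iInf_sup hlin .bot hL bot_le)
end
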